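/- arXiv:1405.0934 — 12 statements merged into one kernel-verified Lean document; each statement's English description precedes it below -/
import Mathlib

section
/- For all real x with 0 < x < π, the following two-sided inequality holds: (2 − (x/π)³ + cos x)/3 < (sin x)/x < (2 − (x/π)⁴ + cos x)/3. -/
/-!
Write `g x = x (2 + cos x) - 3 sin x`, so that `sin x / x = (2 + cos x) / 3 - g x / (3 x)`. The
claim becomes `x (x / π) ^ 4 < g x < x (x / π) ^ 3`, and since `g π = π` it holds because on
`(0, π]` the quotient `g x / x ^ 4` is strictly increasing and `g x / x ^ 5` strictly decreasing.
The sign of `x g' x - n g x` decides the monotonicity of `g x / x ^ n`. For `n = 4` the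
half-angle formulas factor this expression; for `n = 5` its sign follows by repeated
differentiation from `0`. Both rest on `x ^ 2 sin x < 3 (sin x - x cos x)`.
-/

open Real Set

theorem lt_of_hasDerivAt_lt {f g f' g' : ℝ → ℝ} {a b : ℝ} (hab : a < b) (ha : f a ≤ g a)
    (hfc : ContinuousOn f (Icc a b)) (hgc : ContinuousOn g (Icc a b))
    (hf : ∀ t ∈ Ioo a b, HasDerivAt f (f' t) t) (hg : ∀ t ∈ Ioo a b, HasDerivAt g (g' t) t)
    (hlt : ∀ t ∈ Ioo a b, f' t < g' t) : f b < g b := by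
  have hmono : StrictMonoOn (g - f) (Icc a b) := by
    refine strictMonoOn_of_hasDerivWithinAt_pos (f' := fun t ↦ g' t - f' t) (convex_Icc a b)
      (hgc.sub hfc) ?_ ?_ <;> rw [interior_Icc]
    · exact fun t ht ↦ ((hg t ht).sub (hf t ht)).hasDerivWithinAt
    · exact fun t ht ↦ sub_pos.mpr (hlt t ht)
  have hgap : g a - f a < g b - f b :=
    hmono (left_mem_Icc.mpr hab.le) (right_mem_Icc.mpr hab.le) hab
  linarith

section DivPow

variable {f f' : ℝ → ℝ} {s : Set ℝ} {n : ℕ}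

theorem strictMonoOn_div_pow_of_mul_lt_mul_deriv (hs : Convex ℝ s) (hs0 : s ⊆ Ioi 0)
    (hfc : ContinuousOn f s)
    (hf : ∀ t ∈ interior s, HasDerivWithinAt f (f' t) (interior s) t)
    (hlt : ∀ t ∈ interior s, n * f t < t * f' t) :
    StrictMonoOn (fun t ↦ f t / t ^ n) s := by
  have hpos : ∀ t ∈ interior s, 0 < t := fun t ht ↦ hs0 (interior_subset ht)
  refine strictMonoOn_of_hasDerivWithinAt_pos
    (f' := fun t ↦ (t * f' t - n * f t) / t ^ (n + 1)) hs
    (hfc.div (by fun_prop) fun t ht ↦ pow_ne_zero n (hs0 ht).ne') (fun t ht ↦ ?_)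
    fun t ht ↦ div_pos (sub_pos.mpr (hlt t ht)) (pow_pos (hpos t ht) _)
  have ht0 : t ≠ 0 := (hpos t ht).ne'
  refine ((hf t ht).div (hasDerivAt_pow n t).hasDerivWithinAt
    (pow_ne_zero n ht0)).congr_deriv ?_
  cases n with
  | zero => simp [ht0]
  | succ k =>
    rw [Nat.add_sub_cancel]
    field_simp
    ring

theorem strictAntiOn_div_pow_of_mul_deriv_lt_mul (hs : Convex ℝ s) (hs0 : s ⊆ Ioi 0)
    (hfc : ContinuousOn f s)
    (hf : ∀ t ∈ interior s, HasDerivWithinAt f (f' t) (interior s) t)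
    (hlt : ∀ t ∈ interior s, t * f' t < n * f t) :
    StrictAntiOn (fun t ↦ f t / t ^ n) s := by
  have hmono : StrictMonoOn (fun t ↦ -f t / t ^ n) s :=
    strictMonoOn_div_pow_of_mul_lt_mul_deriv hs hs0 hfc.neg (fun t ht ↦ (hf t ht).neg)
      fun t ht ↦ by linarith [hlt t ht]
  simpa only [neg_div, neg_neg] using hmono.neg

end DivPow

section TrigonometricBounds

variable {x : ℝ}

theorem mul_cos_lt_sin (hx0 : 0 < x) (hxpi : x ≤ π) : x * cos x < sin x := by
  refine lt_of_hasDerivAt_lt (f := fun t ↦ t * cos t) hx0 (by simp) (by fun_prop) (by fun_prop)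
    (fun t _ ↦ (hasDerivAt_id' t).mul (hasDerivAt_cos t)) (fun t _ ↦ hasDerivAt_sin t)
    fun t ht ↦ ?_
  have hsin : 0 < t * sin t :=
    mul_pos ht.1 (sin_pos_of_pos_of_lt_pi ht.1 (ht.2.trans_le hxpi))
  linarith

theorem sq_mul_sin_lt_three_mul_sin_sub_mul_cos (hx0 : 0 < x) (hxpi : x ≤ π) :
    x ^ 2 * sin x < 3 * (sin x - x * cos x) := by
  refine lt_of_hasDerivAt_lt (f := fun t ↦ t ^ 2 * sin t)
    (g := fun t ↦ 3 * (sin t - t * cos t)) hx0 (by simp) (by fun_prop) (by fun_prop)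
    (fun t _ ↦ (hasDerivAt_pow 2 t).mul (hasDerivAt_sin t))
    (fun t _ ↦ ((hasDerivAt_sin t).sub
      ((hasDerivAt_id' t).mul (hasDerivAt_cos t))).const_mul 3) fun t ht ↦ ?_
  have hcos : t * (t * cos t) < t * sin t :=
    mul_lt_mul_of_pos_left (mul_cos_lt_sin ht.1 (ht.2.le.trans hxpi)) ht.1
  simp only [Nat.cast_ofNat, Nat.add_one_sub_one, pow_one, one_mul]
  linarith

theorem five_mul_mul_sin_lt_eight_mul_add (hx0 : 0 < x) (hxpi : x ≤ π) :
    5 * (x * sin x) < 8 * (1 - cos x) + x ^ 2 * cos x := by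
  refine lt_of_hasDerivAt_lt (f := fun t ↦ 5 * (t * sin t))
    (g := fun t ↦ 8 * (1 - cos t) + t ^ 2 * cos t) hx0 (by simp) (by fun_prop) (by fun_prop)
    (fun t _ ↦ ((hasDerivAt_id' t).mul (hasDerivAt_sin t)).const_mul 5)
    (fun t _ ↦ (((hasDerivAt_cos t).const_sub 1).const_mul 8).add
      ((hasDerivAt_pow 2 t).mul (hasDerivAt_cos t))) fun t ht ↦ ?_
  have hsin : t ^ 2 * sin t < 3 * (sin t - t * cos t) :=
    sq_mul_sin_lt_three_mul_sin_sub_mul_cos ht.1 (ht.2.le.trans hxpi)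
  simp only [Nat.cast_ofNat, Nat.add_one_sub_one, pow_one, one_mul]
  linarith

theorem fifteen_mul_sin_lt_add (hx0 : 0 < x) (hxpi : x ≤ π) :
    15 * sin x < 8 * x + 7 * (x * cos x) + x ^ 2 * sin x := by
  refine lt_of_hasDerivAt_lt (f := fun t ↦ 15 * sin t)
    (g := fun t ↦ 8 * t + 7 * (t * cos t) + t ^ 2 * sin t) hx0 (by simp) (by fun_prop)
    (by fun_prop) (fun t _ ↦ (hasDerivAt_sin t).const_mul 15)
    (fun t _ ↦ (((hasDerivAt_id' t).const_mul 8).add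
      (((hasDerivAt_id' t).mul (hasDerivAt_cos t)).const_mul 7)).add
      ((hasDerivAt_pow 2 t).mul (hasDerivAt_sin t))) fun t ht ↦ ?_
  have hsin : 5 * (t * sin t) < 8 * (1 - cos t) + t ^ 2 * cos t :=
    five_mul_mul_sin_lt_eight_mul_add ht.1 (ht.2.le.trans hxpi)
  simp only [Nat.cast_ofNat, Nat.add_one_sub_one, pow_one, one_mul]
  linarith

theorem mul_one_add_cos_add_lt_twelve_mul_sin (hx0 : 0 < x) (hxpi : x < π) :
    6 * x * (1 + cos x) + x ^ 2 * sin x < 12 * sin x := by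
  obtain ⟨y, rfl⟩ : ∃ y, x = 2 * y := ⟨x / 2, by ring⟩
  have hcos : 0 < cos y := cos_pos_of_mem_Ioo ⟨by linarith, by linarith⟩
  have hsin : 0 < 3 * (sin y - y * cos y) - y ^ 2 * sin y :=
    sub_pos.mpr (sq_mul_sin_lt_three_mul_sin_sub_mul_cos (by linarith) (by linarith))
  have hfactor : 12 * sin (2 * y) - (6 * (2 * y) * (1 + cos (2 * y)) + (2 * y) ^ 2 * sin (2 * y)) =
      8 * cos y * (3 * (sin y - y * cos y) - y ^ 2 * sin y) := by
    rw [sin_two_mul, cos_two_mul]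
    ring
  rw [← sub_pos, hfactor]
  positivity

end TrigonometricBounds

/-- The difference of the two sides of the Cusa–Huygens inequality `sin x / x < (2 + cos x) / 3`,
multiplied by `3 * x` to clear the denominators. -/
noncomputable def cusaHuygensGap (x : ℝ) : ℝ := x * (2 + cos x) - 3 * sin x

theorem cusaHuygensGap_pi : cusaHuygensGap π = π := by
  rw [cusaHuygensGap, cos_pi, sin_pi]
  ring

theorem sin_div_eq_sub_cusaHuygensGap {x : ℝ} (hx : x ≠ 0) :
    sin x / x = (2 + cos x - cusaHuygensGap x / x) / 3 := by
  rw [cusaHuygensGap]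
  field_simp
  ring

theorem hasDerivAt_cusaHuygensGap (x : ℝ) :
    HasDerivAt cusaHuygensGap (2 * (1 - cos x) - x * sin x) x := by
  refine (((hasDerivAt_id' x).mul ((hasDerivAt_cos x).const_add 2)).sub
    ((hasDerivAt_sin x).const_mul 3)).congr_deriv ?_
  ring

theorem continuous_cusaHuygensGap : Continuous cusaHuygensGap :=
  continuous_iff_continuousAt.mpr fun x ↦ (hasDerivAt_cusaHuygensGap x).continuousAt

theorem strictMonoOn_cusaHuygensGap_div_pow_four :
    StrictMonoOn (fun x ↦ cusaHuygensGap x / x ^ 4) (Ioc 0 π) := by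
  refine strictMonoOn_div_pow_of_mul_lt_mul_deriv (convex_Ioc 0 π) (fun _ hx ↦ hx.1)
    continuous_cusaHuygensGap.continuousOn
    (fun x _ ↦ (hasDerivAt_cusaHuygensGap x).hasDerivWithinAt) fun x hx ↦ ?_
  rw [interior_Ioc] at hx
  have hsin := mul_one_add_cos_add_lt_twelve_mul_sin hx.1 hx.2
  rw [cusaHuygensGap]
  push_cast
  linarith

theorem strictAntiOn_cusaHuygensGap_div_pow_five :
    StrictAntiOn (fun x ↦ cusaHuygensGap x / x ^ 5) (Ioc 0 π) := by
  refine strictAntiOn_div_pow_of_mul_deriv_lt_mul (convex_Ioc 0 π) (fun _ hx ↦ hx.1)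
    continuous_cusaHuygensGap.continuousOn
    (fun x _ ↦ (hasDerivAt_cusaHuygensGap x).hasDerivWithinAt) fun x hx ↦ ?_
  rw [interior_Ioc] at hx
  have hsin := fifteen_mul_sin_lt_add hx.1 hx.2.le
  rw [cusaHuygensGap]
  push_cast
  linarith

theorem cusaHuygensGap_div_lt_div_pi_pow_three {x : ℝ} (hx0 : 0 < x) (hxpi : x < π) :
    cusaHuygensGap x / x < (x / π) ^ 3 := by
  have hquot : cusaHuygensGap x / x ^ 4 < cusaHuygensGap π / π ^ 4 :=
    strictMonoOn_cusaHuygensGap_div_pow_four ⟨hx0, hxpi.le⟩ ⟨pi_pos, le_rfl⟩ hxpi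
  calc cusaHuygensGap x / x = cusaHuygensGap x / x ^ 4 * x ^ 3 := by field_simp
    _ < cusaHuygensGap π / π ^ 4 * x ^ 3 := by gcongr
    _ = (x / π) ^ 3 := by rw [cusaHuygensGap_pi]; field_simp

theorem div_pi_pow_four_lt_cusaHuygensGap_div {x : ℝ} (hx0 : 0 < x) (hxpi : x < π) :
    (x / π) ^ 4 < cusaHuygensGap x / x := by
  have hquot : cusaHuygensGap π / π ^ 5 < cusaHuygensGap x / x ^ 5 :=
    strictAntiOn_cusaHuygensGap_div_pow_five ⟨hx0, hxpi.le⟩ ⟨pi_pos, le_rfl⟩ hxpi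
  calc (x / π) ^ 4 = cusaHuygensGap π / π ^ 5 * x ^ 4 := by rw [cusaHuygensGap_pi]; field_simp
    _ < cusaHuygensGap x / x ^ 5 * x ^ 4 := by gcongr
    _ = cusaHuygensGap x / x := by field_simp

theorem sin_div_bounds_cubic_quartic (x : ℝ) (hx0 : 0 < x) (hxpi : x < Real.pi) :
    (2 - (x / Real.pi) ^ 3 + Real.cos x) / 3 < Real.sin x / x ∧
    Real.sin x / x < (2 - (x / Real.pi) ^ 4 + Real.cos x) / 3 := by
  rw [sin_div_eq_sub_cusaHuygensGap hx0.ne']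
  constructor
  · linarith [cusaHuygensGap_div_lt_div_pi_pow_three hx0 hxpi]
  · linarith [div_pi_pow_four_lt_cusaHuygensGap_div hx0 hxpi]
end

section
/- For all real x with 0 < x < π/2, the following two-sided inequality holds: (1 − x²/π²)^(π²/6) < (sin x)/x < (1 − x²/π²)^(3/2). -/
/-!
Put `t = x² / π²`. Taking logarithms in Euler's product turns `log (sin x / x)` into the series
`∑ log (1 - t / n²)` over `n ≥ 1`, whose terms are compared with those of `∑ 1 / n² = π² / 6`.

Lower bound: by Bernoulli's inequality `log (1 - t / n²) ≥ (1 / n²) log (1 - t)`, strictly for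
`n = 2`. Upper bound: keep the term `n = 1` and use `log (1 - t / n²) ≤ -t / n²` for the others,
which leaves `-(π² / 6 - 1) t < (1 / 2) log (1 - t)` to be shown. By concavity of the right-hand
side, the largest `t` in question is the worst case.
-/

section LogSeries

open Real Filter Topology

theorem mul_log_one_sub_le_log_one_sub_mul {a t : ℝ} (ha0 : 0 ≤ a) (ha1 : a ≤ 1) (ht : t < 1) :
    a * log (1 - t) ≤ log (1 - a * t) := by
  have bernoulli := rpow_one_add_le_one_add_mul_self (s := -t) (by linarith) ha0 ha1
  rw [← sub_eq_add_neg, mul_neg, ← sub_eq_add_neg] at bernoulli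
  exact le_log_of_rpow_le (sub_pos.2 ht) bernoulli

theorem mul_log_one_sub_lt_log_one_sub_mul {a t : ℝ} (ha0 : 0 < a) (ha1 : a < 1) (ht0 : t ≠ 0)
    (ht1 : t < 1) : a * log (1 - t) < log (1 - a * t) := by
  have bernoulli :=
    rpow_one_add_lt_one_add_mul_self (s := -t) (by linarith) (neg_ne_zero.2 ht0) ha0 ha1
  rw [← sub_eq_add_neg, mul_neg, ← sub_eq_add_neg] at bernoulli
  exact lt_log_of_rpow_lt (sub_pos.2 ht1) bernoulli

section Weights

variable {ι : Type*} {a : ι → ℝ} {S L t : ℝ}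

theorem mul_log_one_sub_lt_of_hasSum (ha0 : ∀ i, 0 ≤ a i) (ha1 : ∀ i, a i ≤ 1) (ht0 : t ≠ 0)
    (ht1 : t < 1) (hS : HasSum a S) (hL : HasSum (fun i ↦ log (1 - a i * t)) L) {k : ι}
    (hk0 : 0 < a k) (hk1 : a k < 1) : S * log (1 - t) < L :=
  hasSum_lt (fun i ↦ mul_log_one_sub_le_log_one_sub_mul (ha0 i) (ha1 i) ht1)
    (mul_log_one_sub_lt_log_one_sub_mul hk0 hk1 ht0 ht1) (hS.mul_right _) hL

theorem le_log_one_sub_mul_sub_of_hasSum (hat : ∀ i, a i * t < 1) (hS : HasSum a S)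
    (hL : HasSum (fun i ↦ log (1 - a i * t)) L) (k : ι) :
    L ≤ log (1 - a k * t) - (S - a k) * t := by
  have defect_nonneg (i : ι) : 0 ≤ -(log (1 - a i * t) + a i * t) := by
    linarith [log_le_sub_one_of_pos (sub_pos.2 (hat i))]
  have := le_hasSum (hL.add (hS.mul_right t)).neg k fun i _ ↦ defect_nonneg i
  linarith

end Weights

theorem hasSum_log_of_tendsto_prod_range {u : ℕ → ℝ} {P : ℝ} (hu0 : ∀ n, 0 < u n)
    (hu1 : ∀ n, u n ≤ 1) (hP : P ≠ 0)
    (h : Tendsto (fun N ↦ ∏ n ∈ Finset.range N, u n) atTop (𝓝 P)) :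
    HasSum (fun n ↦ log (u n)) (log P) := by
  suffices HasSum (fun n ↦ -log (u n)) (-log P) by simpa only [neg_neg] using this.neg
  rw [hasSum_iff_tendsto_nat_of_nonneg fun n ↦
    neg_nonneg.2 (log_nonpos (hu0 n).le (hu1 n))]
  refine (h.log hP).neg.congr fun N ↦ ?_
  rw [log_prod fun n _ ↦ (hu0 n).ne', Finset.sum_neg_distrib]

end LogSeries

section EulerProduct

open Real Filter Topology

theorem hasSum_one_div_add_one_sq :
    HasSum (fun n : ℕ ↦ 1 / ((n : ℝ) + 1) ^ 2) (π ^ 2 / 6) := by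
  simpa using (hasSum_nat_add_iff' 1).2 hasSum_zeta_two

theorem one_div_add_one_sq_le_one (n : ℕ) : 1 / ((n : ℝ) + 1) ^ 2 ≤ 1 :=
  div_le_one_of_le₀ (one_le_pow₀ (by simp)) (by positivity)

variable {x : ℝ}

theorem sq_div_pi_sq_lt_one (hx : |x| < π) : x ^ 2 / π ^ 2 < 1 := by
  rw [div_lt_one (by positivity), sq_lt_sq, abs_of_pos pi_pos]
  exact hx

theorem one_div_add_one_sq_mul_lt_one (hx : |x| < π) (n : ℕ) :
    1 / ((n : ℝ) + 1) ^ 2 * (x ^ 2 / π ^ 2) < 1 :=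
  mul_lt_one_of_nonneg_of_lt_one_right (one_div_add_one_sq_le_one n) (by positivity)
    (sq_div_pi_sq_lt_one hx)

theorem sin_div_self_pos (hx0 : x ≠ 0) (hx : |x| < π) : 0 < sin x / x := by
  rcases hx0.lt_or_gt with neg | pos
  · exact div_pos_of_neg_of_neg (sin_neg_of_neg_of_neg_pi_lt neg (abs_lt.1 hx).1) neg
  · exact div_pos (sin_pos_of_pos_of_lt_pi pos (abs_lt.1 hx).2) pos

theorem tendsto_prod_one_sub_sin_div (hx0 : x ≠ 0) :
    Tendsto (fun N ↦ ∏ n ∈ Finset.range N, (1 - 1 / ((n : ℝ) + 1) ^ 2 * (x ^ 2 / π ^ 2)))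
      atTop (𝓝 (sin x / x)) := by
  have euler := (tendsto_euler_sin_prod (x / π)).div_const x
  rw [mul_div_cancel₀ x pi_ne_zero] at euler
  refine euler.congr fun N ↦ ?_
  rw [mul_div_cancel_left₀ _ hx0]
  exact Finset.prod_congr rfl fun n _ ↦ by ring

theorem hasSum_log_sin_div (hx0 : x ≠ 0) (hx : |x| < π) :
    HasSum (fun n : ℕ ↦ log (1 - 1 / ((n : ℝ) + 1) ^ 2 * (x ^ 2 / π ^ 2))) (log (sin x / x)) :=
  hasSum_log_of_tendsto_prod_range (fun n ↦ sub_pos.2 (one_div_add_one_sq_mul_lt_one hx n))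
    (fun n ↦ sub_le_self _ (by positivity)) (sin_div_self_pos hx0 hx).ne'
    (tendsto_prod_one_sub_sin_div hx0)

end EulerProduct

section Bounds

open Real

variable {x : ℝ}

theorem rpow_lt_sin_div (hx0 : x ≠ 0) (hx : |x| < π) :
    (1 - x ^ 2 / π ^ 2) ^ (π ^ 2 / 6) < sin x / x := by
  have ht1 := sq_div_pi_sq_lt_one hx
  rw [rpow_lt_iff_lt_log (sub_pos.2 ht1) (sin_div_self_pos hx0 hx)]
  exact mul_log_one_sub_lt_of_hasSum (fun n ↦ by positivity) one_div_add_one_sq_le_one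
    (by positivity) ht1 hasSum_one_div_add_one_sq (hasSum_log_sin_div hx0 hx) (k := 1)
    (by norm_num) (by norm_num)

theorem log_sin_div_le (hx0 : x ≠ 0) (hx : |x| < π) :
    log (sin x / x) ≤ log (1 - x ^ 2 / π ^ 2) - (π ^ 2 / 6 - 1) * (x ^ 2 / π ^ 2) := by
  simpa using le_log_one_sub_mul_sub_of_hasSum (one_div_add_one_sq_mul_lt_one hx)
    hasSum_one_div_add_one_sq (hasSum_log_sin_div hx0 hx) 0

theorem log_five_div_four_lt : log (5 / 4) < 23 / 100 := by
  rw [log_lt_iff_lt_exp (by norm_num)]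
  calc (5 / 4 : ℝ) < 1 + 23 / 100 + (23 / 100) ^ 2 / 2 := by norm_num
    _ ≤ exp (23 / 100) := quadratic_le_exp_of_nonneg (by norm_num)

-- The bound 9/25 makes `1 - t` a rational square at the endpoint; the inequality fails at t = 0.42.
theorem neg_two_mul_lt_log_one_sub {t : ℝ} (ht0 : 0 < t) (ht : t ≤ 9 / 25) :
    -(2 * (π ^ 2 / 6 - 1) * t) < log (1 - t) := by
  have endpoint : -(2 * (π ^ 2 / 6 - 1)) * (9 / 25) < log (1 - 9 / 25) := by
    have : log (1 - 9 / 25) = -(2 * log (5 / 4)) := by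
      rw [show (1 - 9 / 25 : ℝ) = ((5 / 4) ^ 2)⁻¹ by norm_num, log_inv, log_pow, Nat.cast_ofNat]
    nlinarith [log_five_div_four_lt, pi_gt_d2]
  have chord := mul_log_one_sub_le_log_one_sub_mul (a := t / (9 / 25)) (t := 9 / 25)
    (by positivity) (by rwa [div_le_one (by norm_num)]) (by norm_num)
  rw [div_mul_cancel₀ t (by norm_num)] at chord
  calc -(2 * (π ^ 2 / 6 - 1) * t) = t / (9 / 25) * (-(2 * (π ^ 2 / 6 - 1)) * (9 / 25)) := by ring
    _ < t / (9 / 25) * log (1 - 9 / 25) := by gcongr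
    _ ≤ log (1 - t) := chord

theorem sin_div_lt_rpow (hx0 : x ≠ 0) (hx : |x| ≤ 3 * π / 5) :
    sin x / x < (1 - x ^ 2 / π ^ 2) ^ ((3 : ℝ) / 2) := by
  have hxpi : |x| < π := by linarith [pi_pos]
  have ht : x ^ 2 / π ^ 2 ≤ 9 / 25 := by
    rw [div_le_iff₀ (by positivity), ← sq_abs]
    calc |x| ^ 2 ≤ (3 * π / 5) ^ 2 := by gcongr
      _ = 9 / 25 * π ^ 2 := by ring
  refine lt_rpow_of_log_lt (by linarith) ?_
  linarith [log_sin_div_le hx0 hxpi, neg_two_mul_lt_log_one_sub (by positivity) ht]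

theorem sin_div_rpow_bounds_general (hx0 : x ≠ 0) :
    (|x| < π → (1 - x ^ 2 / π ^ 2) ^ (π ^ 2 / 6) < sin x / x) ∧
      (|x| ≤ 3 * π / 5 → sin x / x < (1 - x ^ 2 / π ^ 2) ^ ((3 : ℝ) / 2)) :=
  ⟨rpow_lt_sin_div hx0, sin_div_lt_rpow hx0⟩

end Bounds

theorem sin_div_rpow_bounds (x : ℝ) (hx0 : 0 < x) (hxpi : x < Real.pi / 2) :
    (1 - x ^ 2 / Real.pi ^ 2) ^ (Real.pi ^ 2 / 6) < Real.sin x / x ∧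
    Real.sin x / x < (1 - x ^ 2 / Real.pi ^ 2) ^ ((3 : ℝ) / 2) := by
  have habs : |x| = x := abs_of_pos hx0
  exact (sin_div_rpow_bounds_general hx0.ne').imp (· (by linarith)) (· (by linarith))
end

section
/- For all real x with 0 < x < π, the following two-sided inequality holds: 1 − (x/π)²·(2 − x/π) < (sin x)/x < 1 − (1/2)·(x/π)²·(3 − (x/π)²). -/
/-!
Put `t = x / π` and `v = t (1 - t)`. Euler's product for the sine can be read in two ways,
`sin x / x = ∏ (1 - t² / k²) = (1 - t) ∏ (1 + v / (k (k + 1)))` over `k ≥ 1`, the second by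
pairing the factor `k + t` with the next `k + 1 - t`, as `(k + t) (k + 1 - t) = k (k + 1) + v`.

* Without its first factor `1 - t²`, the first product is a convex function of `t² ∈ [0, 1]` with
  values `1` and `1 / 2` at the endpoints. It lies below its chord `1 - t² / 2`, which is the upper
  bound `(1 - t²) (1 - t² / 2)`.
* By the Weierstrass product inequality the second product is at least `1 + v ∑ 1 / (k (k + 1))`,
  that is `1 + v`, which is the lower bound `(1 - t) (1 + v)`.

Splitting off one more factor of each product before applying these inequalities makes them strict.
-/

open Filter Finset Real Topology

section OrderedRing

variable {ι R : Type*} [CommRing R] [LinearOrder R] [IsStrictOrderedRing R]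

theorem prod_one_sub_mul_le (s : Finset ι) {c : ι → R} {u : R}
    (hc₀ : ∀ i ∈ s, 0 ≤ c i) (hc₁ : ∀ i ∈ s, c i ≤ 1) (hu₀ : 0 ≤ u) (hu₁ : u ≤ 1) :
    ∏ i ∈ s, (1 - u * c i) ≤ 1 - u * (1 - ∏ i ∈ s, (1 - c i)) := by
  induction s using Finset.cons_induction with
  | empty => simp
  | cons a s ha ih =>
    simp only [mem_cons, forall_eq_or_imp] at hc₀ hc₁
    rw [prod_cons, prod_cons]
    set P := ∏ i ∈ s, (1 - c i)
    have hP : P ≤ 1 := prod_le_one (fun i hi ↦ sub_nonneg.2 (hc₁.2 i hi))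
      fun i hi ↦ sub_le_self _ (hc₀.2 i hi)
    have hfactor : 0 ≤ 1 - u * c a := sub_nonneg.2 (mul_le_one₀ hu₁ hc₀.1 hc₁.1)
    have hconvex : 0 ≤ u * (1 - u) * (c a * (1 - P)) :=
      mul_nonneg (mul_nonneg hu₀ (sub_nonneg.2 hu₁)) (mul_nonneg hc₀.1 (sub_nonneg.2 hP))
    calc (1 - u * c a) * ∏ i ∈ s, (1 - u * c i)
        ≤ (1 - u * c a) * (1 - u * (1 - P)) :=
          mul_le_mul_of_nonneg_left (ih hc₀.2 hc₁.2) hfactor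
      _ ≤ 1 - u * (1 - (1 - c a) * P) := by linear_combination hconvex

theorem one_add_mul_sum_le_prod (s : Finset ι) {c : ι → R} {v : R}
    (hc : ∀ i ∈ s, 0 ≤ c i) (hv : ∀ i ∈ s, 0 ≤ 1 + v * c i) :
    1 + v * ∑ i ∈ s, c i ≤ ∏ i ∈ s, (1 + v * c i) := by
  induction s using Finset.cons_induction with
  | empty => simp
  | cons a s ha ih =>
    simp only [mem_cons, forall_eq_or_imp] at hc hv
    rw [sum_cons, prod_cons]
    set S := ∑ i ∈ s, c i
    have hcross : 0 ≤ v ^ 2 * (c a * S) :=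
      mul_nonneg (sq_nonneg v) (mul_nonneg hc.1 (sum_nonneg hc.2))
    calc 1 + v * (c a + S) ≤ (1 + v * c a) * (1 + v * S) := by linear_combination hcross
      _ ≤ (1 + v * c a) * ∏ i ∈ s, (1 + v * c i) :=
          mul_le_mul_of_nonneg_left (ih hc.2 hv.2) hv.1

end OrderedRing

section Telescoping

theorem tendsto_one_div_natCast_add_atTop_nhds_zero (a : ℝ) :
    Tendsto (fun n : ℕ ↦ 1 / (n + a)) atTop (𝓝 0) :=
  tendsto_const_nhds.div_atTop (tendsto_atTop_add_const_right _ a tendsto_natCast_atTop_atTop)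

theorem tendsto_prod_one_sub_one_div_sq {a : ℝ} (ha : 1 < a) :
    Tendsto (fun n : ℕ ↦ ∏ j ∈ range n, (1 - 1 / (j + a) ^ 2)) atTop (𝓝 ((a - 1) / a)) := by
  have hpartial (n : ℕ) :
      ∏ j ∈ range n, (1 - 1 / (j + a) ^ 2) = (a - 1) / a * (1 + 1 / (n + (a - 1))) := by
    have ha₁ : 0 < a - 1 := sub_pos.2 ha
    induction n with
    | zero =>
      rw [prod_range_zero, Nat.cast_zero, zero_add]
      field_simp
      ring
    | succ n ih =>
      have : 0 < n + (a - 1) := by positivity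
      have hshift : (n : ℝ) + 1 + (a - 1) = n + a := by ring
      rw [prod_range_succ, ih, Nat.cast_succ, hshift]
      field_simp
      ring
  simp_rw [hpartial]
  simpa using ((tendsto_one_div_natCast_add_atTop_nhds_zero (a - 1)).const_add 1).const_mul
    ((a - 1) / a)

theorem tendsto_sum_one_div_mul_add_one {a : ℝ} (ha : 0 < a) :
    Tendsto (fun n : ℕ ↦ ∑ j ∈ range n, 1 / ((j + a) * (j + a + 1))) atTop (𝓝 (1 / a)) := by
  have hpartial (n : ℕ) :
      ∑ j ∈ range n, 1 / ((j + a) * (j + a + 1)) = 1 / a - 1 / (n + a) := by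
    induction n with
    | zero => simp
    | succ n ih =>
      rw [sum_range_succ, ih, Nat.cast_succ]
      field_simp
      ring
  simp_rw [hpartial]
  simpa using (tendsto_one_div_natCast_add_atTop_nhds_zero a).const_sub (1 / a)

end Telescoping

section Sinc

theorem tendsto_prod_sinc_pi_mul (t : ℝ) :
    Tendsto (fun n : ℕ ↦ ∏ j ∈ range n, (1 - t ^ 2 / ((j : ℝ) + 1) ^ 2)) atTop
      (𝓝 (sinc (π * t))) := by
  rcases eq_or_ne t 0 with rfl | ht
  · simp
  · have hπt : π * t ≠ 0 := mul_ne_zero pi_ne_zero ht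
    simpa [sinc_of_ne_zero hπt, hπt] using (tendsto_euler_sin_prod t).div_const (π * t)

theorem prod_one_sub_sq_div_sq_eq (t : ℝ) (n : ℕ) :
    ∏ j ∈ range (n + 1), (1 - t ^ 2 / ((j : ℝ) + 1) ^ 2) =
      (1 - t) * (∏ j ∈ range n, (1 + t * (1 - t) * (1 / (((j : ℝ) + 1) * (j + 1 + 1))))) *
        (1 + t * (1 / (n + 1))) := by
  induction n with
  | zero =>
    simp only [zero_add, prod_range_one, prod_range_zero, Nat.cast_zero]
    ring
  | succ n ih =>
    rw [prod_range_succ, ih, prod_range_succ _ n, Nat.cast_succ]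
    field_simp
    ring

theorem tendsto_one_sub_mul_prod_sinc_pi_mul (t : ℝ) :
    Tendsto (fun n : ℕ ↦
        (1 - t) * ∏ j ∈ range n, (1 + t * (1 - t) * (1 / (((j : ℝ) + 1) * (j + 1 + 1)))))
      atTop (𝓝 (sinc (π * t))) := by
  have hfactor : Tendsto (fun n : ℕ ↦ 1 + t * (1 / ((n : ℝ) + 1))) atTop (𝓝 1) := by
    simpa using ((tendsto_one_div_natCast_add_atTop_nhds_zero 1).const_mul t).const_add 1
  have hquot := ((tendsto_add_atTop_iff_nat 1).2 (tendsto_prod_sinc_pi_mul t)).div hfactor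
    one_ne_zero
  rw [div_one] at hquot
  refine hquot.congr' ?_
  filter_upwards [hfactor.eventually_ne one_ne_zero] with n hn
  simp only [Pi.div_apply, prod_one_sub_sq_div_sq_eq, mul_div_cancel_right₀ _ hn]

variable {t : ℝ}

theorem sinc_pi_mul_le (ht : |t| ≤ 1) :
    sinc (π * t) ≤ (1 - t ^ 2) * (1 - t ^ 2 / 4) * (1 - t ^ 2 / 3) := by
  have hu : t ^ 2 ≤ 1 := (sq_le_one_iff_abs_le_one t).2 ht
  have hchord (n : ℕ) : ∏ j ∈ range n, (1 - t ^ 2 * (1 / ((j : ℝ) + 3) ^ 2)) ≤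
      1 - t ^ 2 * (1 - ∏ j ∈ range n, (1 - 1 / ((j : ℝ) + 3) ^ 2)) := by
    refine prod_one_sub_mul_le _ (fun j _ ↦ by positivity) (fun j _ ↦ ?_) (sq_nonneg t) hu
    exact div_le_one_of_le₀ (one_le_pow₀ (by linarith [j.cast_nonneg (α := ℝ)])) (by positivity)
  have hsplit (n : ℕ) : ∏ j ∈ range (n + 2), (1 - t ^ 2 / ((j : ℝ) + 1) ^ 2) =
      (1 - t ^ 2) * (1 - t ^ 2 / 4) * ∏ j ∈ range n, (1 - t ^ 2 * (1 / ((j : ℝ) + 3) ^ 2)) := by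
    rw [prod_range_succ', prod_range_succ']
    push_cast
    ring_nf
  have hlim : Tendsto
      (fun n : ℕ ↦ 1 - t ^ 2 * (1 - ∏ j ∈ range n, (1 - 1 / ((j : ℝ) + 3) ^ 2)))
      atTop (𝓝 (1 - t ^ 2 / 3)) := by
    convert! (((tendsto_prod_one_sub_one_div_sq (a := 3) (by norm_num)).const_sub 1).const_mul
      (t ^ 2)).const_sub 1 using 2
    ring
  refine le_of_tendsto_of_tendsto'
    ((tendsto_add_atTop_iff_nat 2).2 (tendsto_prod_sinc_pi_mul t)) (hlim.const_mul _) fun n ↦ ?_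
  rw [hsplit]
  exact mul_le_mul_of_nonneg_left (hchord n) (mul_nonneg (by linarith) (by linarith))

theorem le_sinc_pi_mul (ht₀ : -1 ≤ t) (ht₁ : t ≤ 1) :
    (1 - t) * (1 + t * (1 - t) / 2) ^ 2 ≤ sinc (π * t) := by
  set v := t * (1 - t)
  have hv : 0 ≤ 1 + v / 2 := by
    have : 0 ≤ (1 + t) * (2 - t) := mul_nonneg (by linarith) (by linarith)
    linear_combination this / 2
  have hweierstrass (n : ℕ) : 1 + v * ∑ j ∈ range n, 1 / (((j : ℝ) + 2) * (j + 2 + 1)) ≤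
      ∏ j ∈ range n, (1 + v * (1 / (((j : ℝ) + 2) * (j + 2 + 1)))) := by
    refine one_add_mul_sum_le_prod _ (fun j _ ↦ by positivity) fun j _ ↦ ?_
    have : 0 ≤ (j : ℝ) := j.cast_nonneg
    have hnum : 0 ≤ ((j : ℝ) + 2) * (j + 2 + 1) + v := by nlinarith
    rw [mul_one_div, one_add_div (by positivity)]
    exact div_nonneg hnum (by positivity)
  have hsplit (n : ℕ) :
      ∏ j ∈ range (n + 1), (1 + v * (1 / (((j : ℝ) + 1) * (j + 1 + 1)))) =
        (1 + v / 2) * ∏ j ∈ range n, (1 + v * (1 / (((j : ℝ) + 2) * (j + 2 + 1)))) := by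
    rw [prod_range_succ']
    push_cast
    ring_nf
  have hlim : Tendsto
      (fun n : ℕ ↦ (1 - t) * ((1 + v / 2) *
        (1 + v * ∑ j ∈ range n, 1 / (((j : ℝ) + 2) * (j + 2 + 1)))))
      atTop (𝓝 ((1 - t) * (1 + v / 2) ^ 2)) := by
    convert! ((((tendsto_sum_one_div_mul_add_one (a := 2) two_pos).const_mul v).const_add
      1).const_mul (1 + v / 2)).const_mul (1 - t) using 2
    ring
  refine le_of_tendsto_of_tendsto' hlim
    ((tendsto_add_atTop_iff_nat 1).2 (tendsto_one_sub_mul_prod_sinc_pi_mul t)) fun n ↦ ?_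
  rw [hsplit]
  exact mul_le_mul_of_nonneg_left (mul_le_mul_of_nonneg_left (hweierstrass n) hv)
    (sub_nonneg.2 ht₁)

theorem sinc_pi_mul_lt (ht₀ : t ≠ 0) (ht₁ : |t| < 1) :
    sinc (π * t) < (1 - t ^ 2) * (1 - t ^ 2 / 2) := by
  have hu₀ : 0 < t ^ 2 := by positivity
  have hu₁ : 0 < 1 - t ^ 2 := sub_pos.2 ((sq_lt_one_iff_abs_lt_one t).2 ht₁)
  refine (sinc_pi_mul_le ht₁.le).trans_lt ?_
  linear_combination mul_pos (mul_pos hu₀ hu₁) hu₁ / 12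

theorem lt_sinc_pi_mul (ht₀ : t ≠ 0) (ht₁ : -1 ≤ t) (ht₂ : t < 1) :
    (1 - t) * (1 + t * (1 - t)) < sinc (π * t) := by
  have h₁ : 0 < 1 - t := sub_pos.2 ht₂
  have hgap : 0 < (1 - t) * (t * (1 - t)) ^ 2 :=
    mul_pos h₁ (sq_pos_of_ne_zero (mul_ne_zero ht₀ h₁.ne'))
  refine lt_of_lt_of_le ?_ (le_sinc_pi_mul ht₁ ht₂.le)
  linear_combination hgap / 4

end Sinc

theorem sin_div_cubic_bounds_general (x : ℝ) (hx : x ≠ 0) (hxpi : |x| < π) :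
    1 - (x / π) ^ 2 * (2 - x / π) < sin x / x ∧
    sin x / x < 1 - (1 / 2) * (x / π) ^ 2 * (3 - (x / π) ^ 2) := by
  obtain ⟨t, rfl⟩ : ∃ t, x = π * t := ⟨x / π, (mul_div_cancel₀ x pi_ne_zero).symm⟩
  have ht₀ : t ≠ 0 := right_ne_zero_of_mul hx
  have ht₁ : |t| < 1 := by
    rwa [abs_mul, abs_of_pos pi_pos, mul_lt_iff_lt_one_right pi_pos] at hxpi
  rw [← sinc_of_ne_zero hx, mul_div_cancel_left₀ t pi_ne_zero]
  constructor
  · linear_combination lt_sinc_pi_mul ht₀ (abs_lt.1 ht₁).1.le (abs_lt.1 ht₁).2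
  · linear_combination sinc_pi_mul_lt ht₀ ht₁

theorem sin_div_cubic_bounds (x : ℝ) (hx0 : 0 < x) (hxpi : x < Real.pi) :
    1 - (x / Real.pi) ^ 2 * (2 - x / Real.pi) < Real.sin x / x ∧
    Real.sin x / x < 1 - (1 / 2) * (x / Real.pi) ^ 2 * (3 - (x / Real.pi) ^ 2) :=
  sin_div_cubic_bounds_general x hx0.ne' (by rwa [abs_of_pos hx0])
end

section
/- For all real x, y with 0 < x < 1 and 0 < y < 1, the Euler beta function satisfies B(x, y) < (1/(x·y))·(x + y)/(1 + x·y). -/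
/-!
By Gauss's product formula, `B(x, y)` is the limit of
`bₙ = n! ∏_{j ≤ n} (x + y + j) / ((x + j) (y + j))`. Multiplying `bₙ` by the factor
`(n + 1) / (n + 1 + x y) → 1` makes it strictly decreasing, because for `m = n + 1`
`(x + m) (y + m) (m + 1 + x y) - (x + y + m) (m + 1) (m + x y) = x y (1 - x) (1 - y) > 0`.
So `B(x, y)` is less than the value of the corrected sequence at `n = 0`.
-/

open Filter Topology
open ProbabilityTheory (beta)

/-- The `n`-th Gauss product for the beta function `B(x, y)`. For `n ≠ 0` it is the quotient
`Γₙ(x) Γₙ(y) / Γₙ(x + y)` of the sequences `Real.GammaSeq`; the powers of `n` in these cancel and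
are left out, so that the value at `n = 0` is meaningful. -/
noncomputable def betaSeq (x y : ℝ) (n : ℕ) : ℝ :=
  n.factorial * ∏ j ∈ Finset.range (n + 1), (x + y + j) / ((x + j) * (y + j))

/-- The Gauss product `betaSeq` times a correction factor tending to `1`, chosen so that the terms
are upper bounds for `B(x, y)` when `(1 - x) (1 - y) > 0`. -/
noncomputable def betaUpperSeq (x y : ℝ) (n : ℕ) : ℝ :=
  betaSeq x y n * ((n + 1) / (n + 1 + x * y))

section

variable {x y : ℝ}

theorem betaSeq_zero (x y : ℝ) : betaSeq x y 0 = (x + y) / (x * y) := by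
  simp [betaSeq]

theorem betaSeq_succ (x y : ℝ) (n : ℕ) :
    betaSeq x y (n + 1) =
      betaSeq x y n * ((n + 1) * (x + y + (n + 1)) / ((x + (n + 1)) * (y + (n + 1)))) := by
  rw [betaSeq, betaSeq, Finset.prod_range_succ _ (n + 1), Nat.factorial_succ]
  push_cast
  ring

theorem betaSeq_pos (hx : 0 < x) (hy : 0 < y) (n : ℕ) : 0 < betaSeq x y n :=
  mul_pos (by positivity) (Finset.prod_pos fun _ _ ↦ by positivity)

theorem GammaSeq_mul_div_GammaSeq_add (x y : ℝ) {n : ℕ} (hn : n ≠ 0) :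
    Real.GammaSeq x n * Real.GammaSeq y n / Real.GammaSeq (x + y) n = betaSeq x y n := by
  have hn_pos : (0 : ℝ) < n := by positivity
  have hpow_x : (n : ℝ) ^ x ≠ 0 := by positivity
  have hpow_y : (n : ℝ) ^ y ≠ 0 := by positivity
  have hfact : (n.factorial : ℝ) ≠ 0 := by positivity
  simp only [Real.GammaSeq, betaSeq, Real.rpow_add hn_pos, Finset.prod_div_distrib,
    Finset.prod_mul_distrib]
  field_simp

theorem tendsto_betaSeq (hxy : Real.Gamma (x + y) ≠ 0) :
    Tendsto (betaSeq x y) atTop (𝓝 (beta x y)) := by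
  refine (((Real.GammaSeq_tendsto_Gamma x).mul (Real.GammaSeq_tendsto_Gamma y)).div
    (Real.GammaSeq_tendsto_Gamma (x + y)) hxy).congr' ?_
  filter_upwards [eventually_ne_atTop 0] with n hn
  exact GammaSeq_mul_div_GammaSeq_add x y hn

theorem tendsto_betaUpperSeq (hxy : Real.Gamma (x + y) ≠ 0) :
    Tendsto (betaUpperSeq x y) atTop (𝓝 (beta x y)) := by
  have hfactor : Tendsto (fun n : ℕ ↦ ((n : ℝ) + 1) / (n + 1 + x * y)) atTop (𝓝 1) :=
    mod_cast (tendsto_natCast_div_add_atTop (x * y)).comp (tendsto_add_atTop_nat 1)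
  rw [← mul_one (beta x y)]
  exact (tendsto_betaSeq hxy).mul hfactor

theorem betaUpperSeq_step_lt (hx : 0 < x) (hy : 0 < y) (hxy : 0 < (1 - x) * (1 - y))
    {m : ℝ} (hm : 0 < m) :
    m * (x + y + m) / ((x + m) * (y + m)) * ((m + 1) / (m + 1 + x * y)) < m / (m + x * y) := by
  rw [div_mul_div_comm, div_lt_div_iff₀ (by positivity) (by positivity), ← sub_pos]
  calc 0 < m * (x * y * ((1 - x) * (1 - y))) := by positivity
    _ = _ := by ring

theorem strictAnti_betaUpperSeq (hx : 0 < x) (hy : 0 < y) (hxy : 0 < (1 - x) * (1 - y)) :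
    StrictAnti (betaUpperSeq x y) := by
  refine strictAnti_nat_of_succ_lt fun n ↦ ?_
  rw [betaUpperSeq, betaUpperSeq, betaSeq_succ, mul_assoc, Nat.cast_succ]
  exact mul_lt_mul_of_pos_left (betaUpperSeq_step_lt hx hy hxy n.cast_add_one_pos)
    (betaSeq_pos hx hy n)

theorem beta_lt_betaUpperSeq (hx : 0 < x) (hy : 0 < y) (hxy : 0 < (1 - x) * (1 - y)) (n : ℕ) :
    beta x y < betaUpperSeq x y n := by
  have hanti := strictAnti_betaUpperSeq hx hy hxy
  have hlim := tendsto_betaUpperSeq (Real.Gamma_pos_of_pos (add_pos hx hy)).ne'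
  exact (hanti.antitone.le_of_tendsto hlim (n + 1)).trans_lt (hanti n.lt_succ_self)

theorem beta_upper_bound_general (hx : 0 < x) (hy : 0 < y) (hxy : 0 < (1 - x) * (1 - y)) :
    Real.Gamma x * Real.Gamma y / Real.Gamma (x + y) <
      (1 / (x * y)) * ((x + y) / (1 + x * y)) := by
  calc Real.Gamma x * Real.Gamma y / Real.Gamma (x + y)
    _ < betaUpperSeq x y 0 := beta_lt_betaUpperSeq hx hy hxy 0
    _ = (x + y) / (x * y) * (1 / (1 + x * y)) := by
      rw [betaUpperSeq, betaSeq_zero, Nat.cast_zero, zero_add]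
    _ = (1 / (x * y)) * ((x + y) / (1 + x * y)) := by ring

end

theorem beta_upper_bound (x y : ℝ) (hx0 : 0 < x) (hx1 : x < 1) (hy0 : 0 < y) (hy1 : y < 1) :
    Real.Gamma x * Real.Gamma y / Real.Gamma (x + y) < (1 / (x * y)) * ((x + y) / (1 + x * y)) :=
  beta_upper_bound_general hx0 hy0 (mul_pos (sub_pos.2 hx1) (sub_pos.2 hy1))
end

section
/- For all real x, y with 1 < x and 0 < y < 1, the Euler beta function satisfies (1/(x·y))·(x + y)/(1 + x·y) < B(x, y). -/
/-!
Euler's product `Γ(x+1) Γ(y+1) / Γ(x+y+1) = ∏_{k ≥ 1} k (k + x + y) / (k (k + x + y) + x y)` shows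
that, among positive pairs with a fixed product `x y`, the left-hand side is strictly increasing in
the sum `x + y`. When `(x - 1) (1 - y) > 0`, the pair `(1, x y)` has the same product as `(x, y)`
but a smaller sum, and at `(1, x y)` the left-hand side equals `1 / (1 + x y)`.
-/

open Filter Finset Topology

theorem lt_of_tendsto_prod_range {R : Type*} [CommSemiring R] [LinearOrder R]
    [IsStrictOrderedRing R] [TopologicalSpace R] [OrderClosedTopology R] [ContinuousMul R]
    {f g : ℕ → R} {F G : R} {i : ℕ} (hg : ∀ k, 0 < g k) (hle : ∀ k, g k ≤ f k) (hlt : g i < f i)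
    (hG : 0 < G) (hgG : Tendsto (fun n ↦ ∏ k ∈ range n, g k) atTop (𝓝 G))
    (hfF : Tendsto (fun n ↦ ∏ k ∈ range n, f k) atTop (𝓝 F)) : G < F := by
  -- Keeping the strict factor outside the limit preserves the strict inequality.
  have cross_le : ∀ᶠ n in atTop, f i * ∏ k ∈ range n, g k ≤ g i * ∏ k ∈ range n, f k := by
    filter_upwards [eventually_gt_atTop i] with n hn
    have hi : i ∈ range n := mem_range.mpr hn
    rw [← mul_prod_erase _ g hi, ← mul_prod_erase _ f hi, mul_left_comm]
    have hfi : 0 ≤ f i := (hg i).le.trans (hle i)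
    gcongr with k
    · exact (hg i).le
    · exact fun k _ ↦ (hg k).le
    · exact hle k
  have limit_le : f i * G ≤ g i * F :=
    le_of_tendsto_of_tendsto (hgG.const_mul _) (hfF.const_mul _) cross_le
  exact lt_of_mul_lt_mul_left ((mul_lt_mul_of_pos_right hlt hG).trans_le limit_le) (hg i).le

/-- The factor of index `k + 1` in Euler's infinite product for `Γ(x+1) Γ(y+1) / Γ(x+y+1)`; the
shift makes the product start at `k = 0`. -/
noncomputable def eulerBetaFactor (x y : ℝ) (k : ℕ) : ℝ :=
  (k + 1) * (x + y + 1 + k) / ((x + 1 + k) * (y + 1 + k))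

section EulerProduct

variable {x y : ℝ}

theorem prod_range_eulerBetaFactor (n : ℕ) :
    ∏ k ∈ range n, eulerBetaFactor x y k =
      n.factorial * (∏ k ∈ range n, (x + y + 1 + k)) /
        ((∏ k ∈ range n, (x + 1 + k)) * ∏ k ∈ range n, (y + 1 + k)) := by
  simp only [eulerBetaFactor, prod_div_distrib, prod_mul_distrib]
  rw [← prod_range_add_one_eq_factorial]
  push_cast
  rfl

theorem GammaSeq_mul_GammaSeq_div_GammaSeq {n : ℕ} (hn : n ≠ 0) :
    Real.GammaSeq (x + 1) n * Real.GammaSeq (y + 1) n / Real.GammaSeq (x + y + 1) n =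
      n / (n + 1) * ∏ k ∈ range (n + 1), eulerBetaFactor x y k := by
  have hn_pos : (0 : ℝ) < n := by positivity
  have hpow_x : (n : ℝ) ^ x ≠ 0 := (Real.rpow_pos_of_pos hn_pos x).ne'
  have hpow_y : (n : ℝ) ^ y ≠ 0 := (Real.rpow_pos_of_pos hn_pos y).ne'
  rw [prod_range_eulerBetaFactor]
  simp only [Real.GammaSeq, Nat.factorial_succ, Nat.cast_mul, Nat.cast_succ,
    Real.rpow_add hn_pos, Real.rpow_one]
  field_simp

theorem tendsto_prod_eulerBetaFactor (hxy : Real.Gamma (x + y + 1) ≠ 0) :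
    Tendsto (fun n ↦ ∏ k ∈ range n, eulerBetaFactor x y k) atTop
      (𝓝 (Real.Gamma (x + 1) * Real.Gamma (y + 1) / Real.Gamma (x + y + 1))) := by
  have hseq := ((Real.GammaSeq_tendsto_Gamma (x + 1)).mul
    (Real.GammaSeq_tendsto_Gamma (y + 1))).div (Real.GammaSeq_tendsto_Gamma (x + y + 1)) hxy
  have hquot := hseq.div (tendsto_natCast_div_add_atTop (1 : ℝ)) one_ne_zero
  rw [div_one] at hquot
  refine (tendsto_add_atTop_iff_nat 1).mp (hquot.congr' ?_)
  filter_upwards [eventually_ne_atTop 0] with n hn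
  have hn_ratio : (n : ℝ) / (n + 1) ≠ 0 := by positivity
  simp only [Pi.div_apply]
  rw [GammaSeq_mul_GammaSeq_div_GammaSeq hn, mul_div_cancel_left₀ _ hn_ratio]

theorem eulerBetaFactor_pos (hx : 0 < x) (hy : 0 < y) (k : ℕ) : 0 < eulerBetaFactor x y k := by
  unfold eulerBetaFactor
  positivity

theorem eulerBetaFactor_lt_of_mul_eq {u v : ℝ} (hu : 0 < u) (hv : 0 < v) (hx : 0 < x) (hy : 0 < y)
    (hmul : u * v = x * y) (hadd : u + v < x + y) (k : ℕ) :
    eulerBetaFactor u v k < eulerBetaFactor x y k := by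
  have hgap : 0 < x * y * (k + 1) * ((x + y) - (u + v)) :=
    mul_pos (by positivity) (sub_pos.mpr hadd)
  have denom_eq (a b : ℝ) :
      (a + 1 + k) * (b + 1 + k) = (k + 1) * (a + b + 1 + k) + a * b := by ring
  unfold eulerBetaFactor
  rw [denom_eq, denom_eq, hmul, div_lt_div_iff₀ (by positivity) (by positivity)]
  linarith

theorem Gamma_add_one_mul_div_lt_of_mul_eq {u v : ℝ} (hu : 0 < u) (hv : 0 < v) (hx : 0 < x)
    (hy : 0 < y) (hmul : u * v = x * y) (hadd : u + v < x + y) :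
    Real.Gamma (u + 1) * Real.Gamma (v + 1) / Real.Gamma (u + v + 1) <
      Real.Gamma (x + 1) * Real.Gamma (y + 1) / Real.Gamma (x + y + 1) := by
  have factor_lt := eulerBetaFactor_lt_of_mul_eq hu hv hx hy hmul hadd
  exact lt_of_tendsto_prod_range (eulerBetaFactor_pos hu hv) (fun k ↦ (factor_lt k).le)
    (factor_lt 0) (by positivity) (tendsto_prod_eulerBetaFactor (by positivity))
    (tendsto_prod_eulerBetaFactor (by positivity))

end EulerProduct

theorem Gamma_mul_Gamma_div_Gamma_add {x y : ℝ} (hx : x ≠ 0) (hy : y ≠ 0) (hxy : x + y ≠ 0) :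
    Real.Gamma x * Real.Gamma y / Real.Gamma (x + y) = (x + y) / (x * y) *
      (Real.Gamma (x + 1) * Real.Gamma (y + 1) / Real.Gamma (x + y + 1)) := by
  rw [Real.Gamma_add_one hx, Real.Gamma_add_one hy, Real.Gamma_add_one hxy]
  field_simp

theorem Gamma_two_mul_Gamma_add_one_div {p : ℝ} (hp : 0 < 1 + p) :
    Real.Gamma (1 + 1) * Real.Gamma (p + 1) / Real.Gamma (1 + p + 1) = 1 / (1 + p) := by
  have hΓ : Real.Gamma (1 + p) ≠ 0 := (Real.Gamma_pos_of_pos hp).ne'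
  rw [one_add_one_eq_two, Real.Gamma_two, add_comm p, Real.Gamma_add_one hp.ne']
  field_simp

theorem beta_lower_bound (x y : ℝ) (hx : 1 < x) (hy0 : 0 < y) (hy1 : y < 1) :
    (1 / (x * y)) * ((x + y) / (1 + x * y)) < Real.Gamma x * Real.Gamma y / Real.Gamma (x + y) := by
  have hx0 : 0 < x := one_pos.trans hx
  have hxy : 0 < x * y := mul_pos hx0 hy0
  have hadd : 1 + x * y < x + y := by
    linarith [mul_pos (sub_pos.mpr hx) (sub_pos.mpr hy1)]
  calc 1 / (x * y) * ((x + y) / (1 + x * y))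
      = (x + y) / (x * y) * (1 / (1 + x * y)) := by ring
    _ = (x + y) / (x * y) *
          (Real.Gamma (1 + 1) * Real.Gamma (x * y + 1) / Real.Gamma (1 + x * y + 1)) := by
        rw [Gamma_two_mul_Gamma_add_one_div (by positivity)]
    _ < (x + y) / (x * y) *
          (Real.Gamma (x + 1) * Real.Gamma (y + 1) / Real.Gamma (x + y + 1)) := by
        gcongr ?_ * ?_
        exact Gamma_add_one_mul_div_lt_of_mul_eq one_pos hxy hx0 hy0 (one_mul _) hadd
    _ = Real.Gamma x * Real.Gamma y / Real.Gamma (x + y) :=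
        (Gamma_mul_Gamma_div_Gamma_add hx0.ne' hy0.ne' (by positivity)).symm
end

section
/- The function g(t) = log((1+t²)/(1−t²)) / log(1/cos(πt/2)) is strictly decreasing on the interval (0,1), with range (1, 16/π²). In particular, for all real x with 0 < x < π, one has (cos(x/2))^(16/π²) < (π² − x²)/(π² + x²) < cos(x/2), and the exponents 16/π² and 1 are best possible. -/
/-!
Write the quotient as `f / g`, where `f' = 4t / (1 - t⁴)` and `g' = (π / 2) tan (πt / 2)`. As `f`
and `g` vanish at `0`, the monotone form of l'Hôpital's rule reduces the monotonicity of `f / g` to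
that of `f' / g'`, which amounts to `sin (πt) (1 + 3t⁴) < πt (1 - t⁴)`. Two factors of Euler's sine
product give this inequality for `t ≤ 2 / 3`, and `sin (πt) < π (1 - t)` gives it for `t ≥ 2 / 3`.

The second-order coefficients of `f` and `g` at `0` give the limit `16 / π²` there. At `1`, the
quotient compares the logarithms of two functions with simple zeros, so its limit is `1`. Finally,
the quotient is the logarithm of `(1 - t²) / (1 + t²)` to base `cos (πt / 2)`, so the power
inequalities at `x = πt` are bounds on its range.
-/

namespace Redheffer

open Real Set Filter Topology

section General

theorem strictAntiOn_div_of_strictAntiOn_deriv_div {a b : ℝ} {f g f' g' : ℝ → ℝ}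
    (hfc : ContinuousOn f (Ico a b)) (hgc : ContinuousOn g (Ico a b))
    (hff' : ∀ x ∈ Ioo a b, HasDerivAt f (f' x) x) (hgg' : ∀ x ∈ Ioo a b, HasDerivAt g (g' x) x)
    (hg' : ∀ x ∈ Ioo a b, 0 < g' x) (h : StrictAntiOn (fun x ↦ f' x / g' x) (Ioo a b)) :
    StrictAntiOn (fun x ↦ (f x - f a) / (g x - g a)) (Ioo a b) := by
  have cauchy {u v : ℝ} (hau : a ≤ u) (huv : u < v) (hvb : v < b) :
      ∃ c ∈ Ioo u v, 0 < g v - g u ∧ f v - f u = f' c / g' c * (g v - g u) := by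
    have hIoo : Ioo u v ⊆ Ioo a b := Ioo_subset_Ioo hau hvb.le
    have hIcc : Icc u v ⊆ Ico a b := fun x hx ↦ ⟨hau.trans hx.1, hx.2.trans_lt hvb⟩
    obtain ⟨c, hc, hfg⟩ := exists_ratio_hasDerivAt_eq_ratio_slope f f' huv (hfc.mono hIcc)
      (fun x hx ↦ hff' x (hIoo hx)) g g' (hgc.mono hIcc) (fun x hx ↦ hgg' x (hIoo hx))
    obtain ⟨d, hd, hgd⟩ := exists_hasDerivAt_eq_slope g g' huv (hgc.mono hIcc)
      (fun x hx ↦ hgg' x (hIoo hx))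
    have hgd_pos := hg' d (hIoo hd)
    have hgc_pos := hg' c (hIoo hc)
    rw [hgd, div_pos_iff_of_pos_right (sub_pos.2 huv)] at hgd_pos
    refine ⟨c, hc, hgd_pos, ?_⟩
    rw [div_mul_eq_mul_div, eq_div_iff hgc_pos.ne', ← hfg, mul_comm]
  intro s hs t ht hst
  obtain ⟨c, hc, hgs, hfs⟩ := cauchy le_rfl hs.1 hs.2
  obtain ⟨d, hd, hgst, hfst⟩ := cauchy hs.1.le hst ht.2
  have hcd : f' d / g' d < f' c / g' c :=
    h ⟨hc.1, hc.2.trans hs.2⟩ ⟨hs.1.trans hd.1, hd.2.trans ht.2⟩ (hc.2.trans hd.1)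
  have hgt : 0 < g t - g a := by linarith
  dsimp only
  -- The quotient at `t` is the mediant of the quotients over `[a, s]` and `[s, t]`.
  rw [hfs, mul_div_cancel_right₀ _ hgs.ne', div_lt_iff₀ hgt]
  calc f t - f a = f' c / g' c * (g s - g a) + f' d / g' d * (g t - g s) := by linarith
    _ < f' c / g' c * (g s - g a) + f' c / g' c * (g t - g s) := by gcongr
    _ = f' c / g' c * (g t - g a) := by ring

theorem image_Ioo_eq_of_strictAntiOn_of_tendsto {α β : Type*} [ConditionallyCompleteLinearOrder α]
    [TopologicalSpace α] [OrderTopology α] [DenselyOrdered α] [LinearOrder β] [TopologicalSpace β]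
    [OrderClosedTopology β] {f : α → β} {a b : α} {l m : β} (hab : a < b)
    (hfc : ContinuousOn f (Ioo a b)) (hf : StrictAntiOn f (Ioo a b))
    (hfa : Tendsto f (𝓝[>] a) (𝓝 m)) (hfb : Tendsto f (𝓝[<] b) (𝓝 l)) :
    f '' Ioo a b = Ioo l m := by
  have := nhdsGT_neBot_of_exists_gt ⟨b, hab⟩
  have := nhdsLT_neBot_of_exists_lt ⟨a, hab⟩
  refine Subset.antisymm ?_ (isPreconnected_Ioo.intermediate_value_Ioo
    (le_principal_iff.2 (Ioo_mem_nhdsLT hab)) (le_principal_iff.2 (Ioo_mem_nhdsGT hab)) hfc hfb hfa)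
  rintro _ ⟨t, ht, rfl⟩
  obtain ⟨u, hau, hut⟩ := exists_between ht.1
  obtain ⟨v, htv, hvb⟩ := exists_between ht.2
  have hu : u ∈ Ioo a b := ⟨hau, hut.trans ht.2⟩
  have hv : v ∈ Ioo a b := ⟨ht.1.trans htv, hvb⟩
  have hl : l ≤ f v := le_of_tendsto hfb <| by
    filter_upwards [Ioo_mem_nhdsLT hvb] with x hx using (hf hv ⟨hv.1.trans hx.1, hx.2⟩ hx.1).le
  have hm : f u ≤ m := ge_of_tendsto hfa <| by
    filter_upwards [Ioo_mem_nhdsGT hau] with x hx using (hf ⟨hx.1, hx.2.trans hu.2⟩ hu hx.2).le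
  exact ⟨hl.trans_lt (hf ht hv htv), (hf hu ht hut).trans_le hm⟩

theorem tendsto_div_of_hasDerivAt_of_eq_zero {𝕜 : Type*} [NontriviallyNormedField 𝕜]
    {f g : 𝕜 → 𝕜} {f' g' a : 𝕜} (hf : HasDerivAt f f' a) (hg : HasDerivAt g g' a)
    (hfa : f a = 0) (hga : g a = 0) (hg' : g' ≠ 0) :
    Tendsto (fun x ↦ f x / g x) (𝓝[≠] a) (𝓝 (f' / g')) := by
  refine (hf.tendsto_slope.div hg.tendsto_slope hg').congr' ?_
  filter_upwards [self_mem_nhdsWithin] with x hx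
  rw [Pi.div_apply, slope_def_field, slope_def_field, hfa, hga, sub_zero, sub_zero,
    div_div_div_cancel_right₀ (sub_ne_zero.2 hx)]

theorem tendsto_log_div_log_of_tendsto_div {α : Type*} {l : Filter α} {f g : α → ℝ} {c : ℝ}
    (hc : c ≠ 0) (hfg : Tendsto (fun x ↦ f x / g x) l (𝓝 c)) (hg : Tendsto g l (𝓝[≠] 0)) :
    Tendsto (fun x ↦ log (f x) / log (g x)) l (𝓝 1) := by
  have hlog : Tendsto (fun x ↦ log (g x)) l atBot := tendsto_log_nhdsNE_zero.comp hg
  have h : Tendsto (fun x ↦ log (f x / g x) / log (g x) + 1) l (𝓝 (0 + 1)) :=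
    ((hfg.log hc).div_atBot hlog).add_const 1
  rw [zero_add] at h
  refine h.congr' ?_
  filter_upwards [hfg.eventually_ne hc, hlog.eventually_lt_atBot 0] with x hx hlogx
  obtain ⟨hfx, hgx⟩ := div_ne_zero_iff.1 hx
  rw [log_div hfx hgx, div_add_one hlogx.ne, sub_add_cancel]

end General

section SineInequality

theorem sin_pi_mul_le_mul_prod {x : ℝ} (hx : x ∈ Icc 0 1) (n : ℕ) :
    sin (π * x) ≤ π * x * ∏ j ∈ Finset.range n, (1 - x ^ 2 / ((j : ℝ) + 1) ^ 2) := by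
  have hfactor (j : ℕ) : x ^ 2 / ((j : ℝ) + 1) ^ 2 ≤ 1 := by
    rw [← div_pow]
    have hj : x ≤ j + 1 := hx.2.trans (by simp)
    exact pow_le_one₀ (div_nonneg hx.1 (by positivity)) (div_le_one_of_le₀ hj (by positivity))
  have hanti : Antitone fun n ↦ ∏ j ∈ Finset.range n, (1 - x ^ 2 / ((j : ℝ) + 1) ^ 2) :=
    (Finset.prod_anti_set_of_le_one (fun j ↦ sub_nonneg.2 (hfactor j))
      (fun j ↦ sub_le_self _ (by positivity))).comp_monotone Finset.range_mono
  exact (hanti.const_mul (mul_nonneg pi_pos.le hx.1)).le_of_tendsto (tendsto_euler_sin_prod x) n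

theorem sin_pi_mul_mul_lt_of_le_two_thirds {t : ℝ} (h0 : 0 < t) (ht : t ≤ 2 / 3) :
    sin (π * t) * (1 + 3 * t ^ 4) < π * t * (1 - t ^ 4) := by
  have hsq : t ^ 2 ≤ 4 / 9 := by nlinarith
  have hsin : sin (π * t) ≤ π * t * ((1 - t ^ 2) * (1 - t ^ 2 / 4)) := by
    have := sin_pi_mul_le_mul_prod ⟨h0.le, ht.trans (by norm_num)⟩ 2
    norm_num [Finset.prod_range_succ] at this
    exact this
  have hpoly : (1 - t ^ 2 / 4) * (1 + 3 * t ^ 4) < 1 + t ^ 2 := by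
    have hquad : 0 < 5 / 4 - 3 * t ^ 2 + 3 / 4 * t ^ 4 := by nlinarith
    linear_combination t ^ 2 * hquad
  calc sin (π * t) * (1 + 3 * t ^ 4)
      ≤ π * t * ((1 - t ^ 2) * (1 - t ^ 2 / 4)) * (1 + 3 * t ^ 4) := by gcongr
    _ = π * t * (1 - t ^ 2) * ((1 - t ^ 2 / 4) * (1 + 3 * t ^ 4)) := by ring
    _ < π * t * (1 - t ^ 2) * (1 + t ^ 2) := by
      have : 0 < 1 - t ^ 2 := by linarith
      gcongr
    _ = π * t * (1 - t ^ 4) := by ring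

theorem sin_pi_mul_mul_lt_of_two_thirds_le {t : ℝ} (ht : 2 / 3 ≤ t) (h1 : t < 1) :
    sin (π * t) * (1 + 3 * t ^ 4) < π * t * (1 - t ^ 4) := by
  have hsin : sin (π * t) < π * (1 - t) := by
    rw [← sin_pi_sub, ← mul_one_sub]
    exact sin_lt (mul_pos pi_pos (sub_pos.2 h1))
  have hpoly : 1 + 3 * t ^ 4 ≤ t * (1 + t) * (1 + t ^ 2) := by
    have hcubic : 0 ≤ 2 - 8 * (1 - t) + 7 * (1 - t) ^ 2 - 2 * (1 - t) ^ 3 := by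
      nlinarith [mul_nonneg (sub_nonneg.2 ht) (sub_nonneg.2 h1.le), sq_nonneg (1 - t)]
    linear_combination (1 - t) * hcubic
  calc sin (π * t) * (1 + 3 * t ^ 4) < π * (1 - t) * (1 + 3 * t ^ 4) := by gcongr
    _ ≤ π * (1 - t) * (t * (1 + t) * (1 + t ^ 2)) := by
      have : 0 ≤ 1 - t := by linarith
      gcongr
    _ = π * t * (1 - t ^ 4) := by ring

theorem sin_pi_mul_mul_lt {t : ℝ} (ht : t ∈ Ioo 0 1) :
    sin (π * t) * (1 + 3 * t ^ 4) < π * t * (1 - t ^ 4) :=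
  (le_total t (2 / 3)).elim (sin_pi_mul_mul_lt_of_le_two_thirds ht.1)
    fun h ↦ sin_pi_mul_mul_lt_of_two_thirds_le h ht.2

end SineInequality

section Derivatives

variable {t : ℝ}

theorem cos_pi_mul_div_two_pos (ht : t ∈ Ioo (-1) 1) : 0 < cos (π * t / 2) :=
  cos_pos_of_mem_Ioo ⟨by nlinarith [pi_pos, ht.1], by nlinarith [pi_pos, ht.2]⟩

theorem hasDerivAt_pi_mul_div_two (t : ℝ) : HasDerivAt (fun t ↦ π * t / 2) (π / 2) t := by
  simpa using ((hasDerivAt_id t).const_mul π).div_const 2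

theorem hasDerivAt_cos_pi_mul_div_two (t : ℝ) :
    HasDerivAt (fun t ↦ cos (π * t / 2)) (-sin (π * t / 2) * (π / 2)) t :=
  (hasDerivAt_pi_mul_div_two t).cos

theorem hasDerivAt_log_one_add_sq_div_one_sub_sq (ht : t ^ 2 ≠ 1) :
    HasDerivAt (fun t ↦ log ((1 + t ^ 2) / (1 - t ^ 2))) (4 * t / (1 - t ^ 4)) t := by
  have hsub : 1 - t ^ 2 ≠ 0 := sub_ne_zero.2 ht.symm
  have hadd : 1 + t ^ 2 ≠ 0 := by positivity
  have hquot := ((hasDerivAt_pow 2 t).const_add 1).div ((hasDerivAt_pow 2 t).const_sub 1) hsub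
  refine (hquot.log (div_ne_zero hadd hsub)).congr_deriv ?_
  rw [show 1 - t ^ 4 = (1 - t ^ 2) * (1 + t ^ 2) by ring, Pi.div_apply]
  field_simp
  ring

theorem hasDerivAt_log_one_div_cos_pi_mul_div_two (ht : cos (π * t / 2) ≠ 0) :
    HasDerivAt (fun t ↦ log (1 / cos (π * t / 2))) (π / 2 * tan (π * t / 2)) t := by
  simp only [one_div, log_inv]
  refine ((hasDerivAt_cos_pi_mul_div_two t).log ht).neg.congr_deriv ?_
  rw [tan_eq_sin_div_cos]
  ring

theorem hasDerivAt_four_mul_div_one_sub_pow_four (ht : t ^ 4 ≠ 1) :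
    HasDerivAt (fun t ↦ 4 * t / (1 - t ^ 4)) (4 * (1 + 3 * t ^ 4) / (1 - t ^ 4) ^ 2) t := by
  refine (((hasDerivAt_id t).const_mul 4).div ((hasDerivAt_pow 4 t).const_sub 1)
    (sub_ne_zero.2 ht.symm)).congr_deriv ?_
  congr 1
  norm_num
  ring

theorem hasDerivAt_pi_div_two_mul_tan (ht : cos (π * t / 2) ≠ 0) :
    HasDerivAt (fun t ↦ π / 2 * tan (π * t / 2)) (π ^ 2 / 4 / cos (π * t / 2) ^ 2) t := by
  have htan := (hasDerivAt_tan ht).comp t (hasDerivAt_pi_mul_div_two t)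
  refine (htan.const_mul (π / 2)).congr_deriv ?_
  ring

theorem tan_pi_mul_div_two_pos (ht : t ∈ Ioo 0 1) : 0 < tan (π * t / 2) :=
  tan_pos_of_pos_of_lt_pi_div_two (by have := ht.1; positivity) (by nlinarith [pi_pos, ht.2])

theorem strictAntiOn_four_mul_div_div_pi_div_two_mul_tan :
    StrictAntiOn (fun t ↦ 4 * t / (1 - t ^ 4) / (π / 2 * tan (π * t / 2))) (Ioo 0 1) := by
  have hderiv (t : ℝ) (ht : t ∈ Ioo 0 1) :=
    (hasDerivAt_four_mul_div_one_sub_pow_four (pow_lt_one₀ ht.1.le ht.2 four_ne_zero).ne).div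
      (hasDerivAt_pi_div_two_mul_tan (cos_pi_mul_div_two_pos ⟨by linarith [ht.1], ht.2⟩).ne')
      (mul_pos pi_div_two_pos (tan_pi_mul_div_two_pos ht)).ne'
  refine strictAntiOn_of_deriv_neg (convex_Ioo 0 1)
    (fun t ht ↦ (hderiv t ht).continuousAt.continuousWithinAt) fun t ht ↦ ?_
  rw [interior_Ioo] at ht
  have hcos := cos_pi_mul_div_two_pos ⟨by linarith [ht.1], ht.2⟩
  have hpow : 0 < 1 - t ^ 4 := sub_pos.2 (pow_lt_one₀ ht.1.le ht.2 four_ne_zero)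
  have htan := tan_pi_mul_div_two_pos ht
  refine (hderiv t ht).deriv.trans_lt (div_neg_of_neg_of_pos ?_ (by positivity))
  have hsin : sin (π * t) = 2 * sin (π * t / 2) * cos (π * t / 2) := by
    rw [← sin_two_mul, mul_div_cancel₀ _ two_ne_zero]
  calc 4 * (1 + 3 * t ^ 4) / (1 - t ^ 4) ^ 2 * (π / 2 * tan (π * t / 2)) -
        4 * t / (1 - t ^ 4) * (π ^ 2 / 4 / cos (π * t / 2) ^ 2)
      = π * (sin (π * t) * (1 + 3 * t ^ 4) - π * t * (1 - t ^ 4)) /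
          ((1 - t ^ 4) ^ 2 * cos (π * t / 2) ^ 2) := by
        rw [hsin, tan_eq_sin_div_cos]
        field_simp
        ring
    _ < 0 := div_neg_of_neg_of_pos
        (mul_neg_of_pos_of_neg pi_pos (sub_neg.2 (sin_pi_mul_mul_lt ht))) (by positivity)

end Derivatives

section Exponent

/-- The exponent `a` for which `cos (π * t / 2) ^ a = (1 - t ^ 2) / (1 + t ^ 2)`, for `t` in
`(0, 1)`. It is written as a quotient of two logarithms that are positive there. -/
noncomputable def exponent (t : ℝ) : ℝ :=
  log ((1 + t ^ 2) / (1 - t ^ 2)) / log (1 / cos (π * t / 2))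

theorem exponent_eq_logb (t : ℝ) :
    exponent t = logb (cos (π * t / 2)) ((1 - t ^ 2) / (1 + t ^ 2)) := by
  rw [exponent, ← inv_div (1 - t ^ 2), one_div, log_inv, log_inv, neg_div_neg_eq, logb]

theorem cos_pi_mul_div_two_lt_one {t : ℝ} (ht : t ∈ Ioo 0 1) : cos (π * t / 2) < 1 := by
  have := mul_pos pi_pos ht.1
  rw [← cos_zero]
  exact cos_lt_cos_of_nonneg_of_le_pi_div_two le_rfl (by nlinarith [pi_pos, ht.2]) (by linarith)

theorem continuousOn_exponent : ContinuousOn exponent (Ioo 0 1) := fun t ht ↦ by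
  have hcos := cos_pi_mul_div_two_pos ⟨by linarith [ht.1], ht.2⟩
  have hlog : log (1 / cos (π * t / 2)) ≠ 0 :=
    (log_pos (one_lt_one_div hcos (cos_pi_mul_div_two_lt_one ht))).ne'
  exact ((hasDerivAt_log_one_add_sq_div_one_sub_sq
    (pow_lt_one₀ ht.1.le ht.2 two_ne_zero).ne).continuousAt.div
    (hasDerivAt_log_one_div_cos_pi_mul_div_two hcos.ne').continuousAt hlog).continuousWithinAt

theorem strictAntiOn_exponent : StrictAntiOn exponent (Ioo 0 1) := by
  have hnum (t : ℝ) (ht : t ∈ Ico 0 1) :=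
    hasDerivAt_log_one_add_sq_div_one_sub_sq (pow_lt_one₀ ht.1 ht.2 two_ne_zero).ne
  have hden (t : ℝ) (ht : t ∈ Ico 0 1) :=
    hasDerivAt_log_one_div_cos_pi_mul_div_two
      (cos_pi_mul_div_two_pos ⟨by linarith [ht.1], ht.2⟩).ne'
  have h := strictAntiOn_div_of_strictAntiOn_deriv_div
    (fun t ht ↦ (hnum t ht).continuousAt.continuousWithinAt)
    (fun t ht ↦ (hden t ht).continuousAt.continuousWithinAt)
    (fun t ht ↦ hnum t (Ioo_subset_Ico_self ht)) (fun t ht ↦ hden t (Ioo_subset_Ico_self ht))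
    (fun t ht ↦ mul_pos pi_div_two_pos (tan_pi_mul_div_two_pos ht))
    strictAntiOn_four_mul_div_div_pi_div_two_mul_tan
  refine h.congr fun t _ ↦ ?_
  simp [exponent]

theorem tendsto_exponent_nhdsNE_zero : Tendsto exponent (𝓝[≠] 0) (𝓝 (16 / π ^ 2)) := by
  have hnear : ∀ᶠ t : ℝ in 𝓝[≠] 0, t ∈ Ioo (-1) 1 :=
    nhdsWithin_le_nhds (Ioo_mem_nhds (by norm_num) one_pos)
  have hnum {t : ℝ} (ht : t ∈ Ioo (-1) 1) :=
    hasDerivAt_log_one_add_sq_div_one_sub_sq ((sq_lt_one_iff_abs_lt_one t).2 (abs_lt.2 ht)).ne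
  have hden {t : ℝ} (ht : t ∈ Ioo (-1) 1) :=
    hasDerivAt_log_one_div_cos_pi_mul_div_two (cos_pi_mul_div_two_pos ht).ne'
  have hnum' : HasDerivAt (fun t : ℝ ↦ 4 * t / (1 - t ^ 4)) 4 0 := by
    simpa using hasDerivAt_four_mul_div_one_sub_pow_four (t := 0) (by norm_num)
  have hden' : HasDerivAt (fun t ↦ π / 2 * tan (π * t / 2)) (π ^ 2 / 4) 0 := by
    simpa using hasDerivAt_pi_div_two_mul_tan (t := 0) (by simp)
  have hpi : π ^ 2 / 4 ≠ 0 := by positivity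
  have hdiv := tendsto_div_of_hasDerivAt_of_eq_zero hnum' hden' (by simp) (by simp) hpi
  rw [show 4 / (π ^ 2 / 4) = 16 / π ^ 2 by field_simp; norm_num] at hdiv
  have h0 : (0 : ℝ) ∈ Ioo (-1) 1 := by simp
  refine HasDerivAt.lhopital_zero_nhdsNE (hnear.mono fun _ ↦ hnum) (hnear.mono fun _ ↦ hden)
    (hden'.eventually_ne hpi) ?_ ?_ hdiv
  · simpa using (hnum h0).continuousAt.tendsto.mono_left nhdsWithin_le_nhds
  · simpa using (hden h0).continuousAt.tendsto.mono_left nhdsWithin_le_nhds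

theorem tendsto_exponent_nhdsNE_one : Tendsto exponent (𝓝[≠] 1) (𝓝 1) := by
  have hnum : HasDerivAt (fun t : ℝ ↦ (1 - t ^ 2) / (1 + t ^ 2)) (-1) 1 := by
    refine (((hasDerivAt_pow 2 1).const_sub 1).div ((hasDerivAt_pow 2 1).const_add 1)
      (by norm_num)).congr_deriv ?_
    norm_num
  have hcos : HasDerivAt (fun t ↦ cos (π * t / 2)) (-(π / 2)) 1 := by
    simpa using hasDerivAt_cos_pi_mul_div_two 1
  have hpi : -(π / 2) ≠ 0 := neg_ne_zero.2 pi_div_two_pos.ne'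
  have hdiv := tendsto_div_of_hasDerivAt_of_eq_zero hnum hcos (by simp) (by simp) hpi
  have hlim := tendsto_log_div_log_of_tendsto_div (div_ne_zero (by norm_num) hpi) hdiv
    (by simpa using hcos.tendsto_nhdsNE hpi)
  exact hlim.congr fun t ↦ (exponent_eq_logb t).symm

theorem image_exponent : exponent '' Ioo 0 1 = Ioo 1 (16 / π ^ 2) :=
  image_Ioo_eq_of_strictAntiOn_of_tendsto one_pos continuousOn_exponent strictAntiOn_exponent
    (tendsto_exponent_nhdsNE_zero.mono_left (nhdsGT_le_nhdsNE 0))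
    (tendsto_exponent_nhdsNE_one.mono_left (nhdsLT_le_nhdsNE 1))

theorem one_lt_sixteen_div_pi_sq : 1 < 16 / π ^ 2 := by
  rw [one_lt_div (by positivity)]
  nlinarith [pi_pos, pi_lt_four]

end Exponent

section PowerInequalities

theorem forall_pos_lt_pi_iff {p : ℝ → Prop} :
    (∀ x, 0 < x → x < π → p x) ↔ ∀ t ∈ Ioo (0 : ℝ) 1, p (π * t) := by
  refine ⟨fun h t ht ↦ h _ (mul_pos pi_pos ht.1) (mul_lt_of_lt_one_right pi_pos ht.2),
    fun h x h0 hx ↦ ?_⟩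
  simpa [mul_div_cancel₀ x pi_ne_zero] using
    h (x / π) ⟨div_pos h0 pi_pos, (div_lt_one pi_pos).2 hx⟩

theorem pi_sq_sub_div_pi_sq_add (t : ℝ) :
    (π ^ 2 - (π * t) ^ 2) / (π ^ 2 + (π * t) ^ 2) = (1 - t ^ 2) / (1 + t ^ 2) := by
  rw [mul_pow, ← mul_one_sub, ← mul_one_add, mul_div_mul_left _ _ (by positivity)]

theorem cos_rpow_lt_iff_exponent_lt {t a : ℝ} (ht : t ∈ Ioo 0 1) :
    cos (π * t / 2) ^ a < (1 - t ^ 2) / (1 + t ^ 2) ↔ exponent t < a := by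
  have hsub : 0 < 1 - t ^ 2 := sub_pos.2 (pow_lt_one₀ ht.1.le ht.2 two_ne_zero)
  rw [exponent_eq_logb, logb_lt_iff_lt_rpow_of_base_lt_one
    (cos_pi_mul_div_two_pos ⟨by linarith [ht.1], ht.2⟩) (cos_pi_mul_div_two_lt_one ht)
    (by positivity)]

theorem lt_cos_rpow_iff_lt_exponent {t b : ℝ} (ht : t ∈ Ioo 0 1) :
    (1 - t ^ 2) / (1 + t ^ 2) < cos (π * t / 2) ^ b ↔ b < exponent t := by
  have hsub : 0 < 1 - t ^ 2 := sub_pos.2 (pow_lt_one₀ ht.1.le ht.2 two_ne_zero)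
  rw [exponent_eq_logb, lt_logb_iff_rpow_lt_of_base_lt_one
    (cos_pi_mul_div_two_pos ⟨by linarith [ht.1], ht.2⟩) (cos_pi_mul_div_two_lt_one ht)
    (by positivity)]

theorem forall_cos_rpow_lt_iff {a : ℝ} :
    (∀ x, 0 < x → x < π → cos (x / 2) ^ a < (π ^ 2 - x ^ 2) / (π ^ 2 + x ^ 2)) ↔
      16 / π ^ 2 ≤ a := by
  rw [forall_pos_lt_pi_iff]
  simp only [pi_sq_sub_div_pi_sq_add]
  calc (∀ t ∈ Ioo (0 : ℝ) 1, cos (π * t / 2) ^ a < (1 - t ^ 2) / (1 + t ^ 2))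
      ↔ ∀ t ∈ Ioo 0 1, exponent t < a := forall₂_congr fun _ ↦ cos_rpow_lt_iff_exponent_lt
    _ ↔ ∀ y ∈ Ioo 1 (16 / π ^ 2), y < a := by rw [← image_exponent, forall_mem_image]
    _ ↔ 16 / π ^ 2 ≤ a :=
      ⟨fun h ↦ (isLUB_Ioo one_lt_sixteen_div_pi_sq).2 fun y hy ↦ (h y hy).le,
        fun h y hy ↦ hy.2.trans_le h⟩

theorem forall_lt_cos_rpow_iff {b : ℝ} :
    (∀ x, 0 < x → x < π → (π ^ 2 - x ^ 2) / (π ^ 2 + x ^ 2) < cos (x / 2) ^ b) ↔ b ≤ 1 := by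
  rw [forall_pos_lt_pi_iff]
  simp only [pi_sq_sub_div_pi_sq_add]
  calc (∀ t ∈ Ioo (0 : ℝ) 1, (1 - t ^ 2) / (1 + t ^ 2) < cos (π * t / 2) ^ b)
      ↔ ∀ t ∈ Ioo 0 1, b < exponent t := forall₂_congr fun _ ↦ lt_cos_rpow_iff_lt_exponent
    _ ↔ ∀ y ∈ Ioo 1 (16 / π ^ 2), b < y := by rw [← image_exponent, forall_mem_image]
    _ ↔ b ≤ 1 :=
      ⟨fun h ↦ (isGLB_Ioo one_lt_sixteen_div_pi_sq).2 fun y hy ↦ (h y hy).le,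
        fun h y hy ↦ h.trans_lt hy.1⟩

end PowerInequalities

end Redheffer

theorem redheffer_cos_half_exponents :
    StrictAntiOn
      (fun t : ℝ => Real.log ((1 + t ^ 2) / (1 - t ^ 2)) / Real.log (1 / Real.cos (Real.pi * t / 2)))
      (Set.Ioo 0 1) ∧
    (fun t : ℝ => Real.log ((1 + t ^ 2) / (1 - t ^ 2)) / Real.log (1 / Real.cos (Real.pi * t / 2))) ''
        Set.Ioo 0 1 = Set.Ioo 1 (16 / Real.pi ^ 2) ∧
    (∀ x : ℝ, 0 < x → x < Real.pi →
      Real.cos (x / 2) ^ (16 / Real.pi ^ 2) < (Real.pi ^ 2 - x ^ 2) / (Real.pi ^ 2 + x ^ 2) ∧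
      (Real.pi ^ 2 - x ^ 2) / (Real.pi ^ 2 + x ^ 2) < Real.cos (x / 2) ^ (1 : ℝ)) ∧
    (∀ a : ℝ,
      (∀ x : ℝ, 0 < x → x < Real.pi →
        Real.cos (x / 2) ^ a < (Real.pi ^ 2 - x ^ 2) / (Real.pi ^ 2 + x ^ 2)) →
      16 / Real.pi ^ 2 ≤ a) ∧
    (∀ b : ℝ,
      (∀ x : ℝ, 0 < x → x < Real.pi →
        (Real.pi ^ 2 - x ^ 2) / (Real.pi ^ 2 + x ^ 2) < Real.cos (x / 2) ^ b) →
      b ≤ 1) :=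
  ⟨Redheffer.strictAntiOn_exponent, Redheffer.image_exponent,
    fun x h0 hx ↦ ⟨Redheffer.forall_cos_rpow_lt_iff.2 le_rfl x h0 hx,
      Redheffer.forall_lt_cos_rpow_iff.2 le_rfl x h0 hx⟩,
    fun _ ↦ Redheffer.forall_cos_rpow_lt_iff.1, fun _ ↦ Redheffer.forall_lt_cos_rpow_iff.1⟩
end

section
/- The function h(t) = (1 − 4t²)/(t²·cos(πt)) − 1/t² is strictly increasing on the interval (0, 1/2), with range ((π² − 8)/2, 16/π − 4). In particular, for all real x with 0 < x < π/2, one has (π² − 4x²)/(π² + α·x²) < cos x < (π² − 4x²)/(π² + β·x²), where α = 16/π − 4 and β = (π² − 8)/2 are best possible. -/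
/-!
Dividing Euler's product for `sin (2πt)` by the one for `sin (πt)` gives
`cos (πt) = ∏_{k ≥ 0} (1 - t² / (k + 1/2)²)`. The factor `k = 0` is `1 - 4t²`, so with `u = t²`
`g u := (1 - 4u) / cos (π√u) = ∏_{k ≥ 1} (1 - u / (k + 1/2)²)⁻¹`
is a product of increasing strictly convex functions that are at least `1`, hence strictly convex.
Since `g 0 = 1`, the function `h t = (g (t²) - 1) / t²` is the slope of a secant of `g` through `0`,
and therefore strictly increasing. Its range is read off from the limits at the endpoints, and the
bounds on the cosine are bounds on `h` because `1 - 4t² = (1 + h t * t²) * cos (πt)`.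
-/

open Filter Real Set Topology

theorem convexOn_of_tendsto {𝕜 E β ι : Type*} [Semiring 𝕜] [PartialOrder 𝕜] [AddCommMonoid E]
    [SMul 𝕜 E] [AddCommMonoid β] [PartialOrder β] [TopologicalSpace β] [OrderClosedTopology β]
    [ContinuousAdd β] [SMul 𝕜 β] [ContinuousConstSMul 𝕜 β] {s : Set E} {l : Filter ι} [l.NeBot]
    {f : ι → E → β} {g : E → β} (hf : ∀ i, ConvexOn 𝕜 s (f i))
    (hlim : ∀ x ∈ s, Tendsto (f · x) l (𝓝 (g x))) : ConvexOn 𝕜 s g := by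
  obtain ⟨i⟩ := l.nonempty_of_neBot
  refine ⟨(hf i).1, fun x hx y hy a b ha hb hab ↦ ?_⟩
  exact le_of_tendsto_of_tendsto' (hlim _ ((hf i).1 hx hy ha hb hab))
    (((hlim x hx).const_smul a).add ((hlim y hy).const_smul b))
    fun j ↦ (hf j).2 hx hy ha hb hab

section Product

variable {E : Type*} [AddCommGroup E] [LinearOrder E] [Module ℝ E] {s : Set E}

theorem convexOn_finset_prod {ι : Type*} (t : Finset ι) {f : ι → E → ℝ} (hs : Convex ℝ s)
    (hconv : ∀ i ∈ t, ConvexOn ℝ s (f i)) (hmono : ∀ i ∈ t, MonotoneOn (f i) s)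
    (hnonneg : ∀ i ∈ t, ∀ x ∈ s, 0 ≤ f i x) : ConvexOn ℝ s fun x ↦ ∏ i ∈ t, f i x := by
  classical
  induction t using Finset.induction_on with
  | empty => simpa using convexOn_const 1 hs
  | insert i t hi ih =>
    simp only [Finset.prod_insert hi]
    rw [Finset.forall_mem_insert] at hconv hmono hnonneg
    have hprod : MonotoneOn (fun x ↦ ∏ j ∈ t, f j x) s := .finsetProd hmono.2 hnonneg.2
    exact hconv.1.mul (ih hconv.2 hmono.2 hnonneg.2) hnonneg.1
      (fun x hx ↦ Finset.prod_nonneg fun j hj ↦ hnonneg.2 j hj x hx) (hmono.1.monovaryOn hprod)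

theorem strictConvexOn_of_tendsto_prod {f : ℕ → E → ℝ} {g : E → ℝ}
    (hzero : StrictConvexOn ℝ s (f 0)) (hconv : ∀ k, ConvexOn ℝ s (f (k + 1)))
    (hmono : ∀ k, MonotoneOn (f k) s) (hone : ∀ k, ∀ x ∈ s, 1 ≤ f k x)
    (hlim : ∀ x ∈ s, Tendsto (fun n ↦ ∏ k ∈ Finset.range n, f k x) atTop (𝓝 (g x))) :
    StrictConvexOn ℝ s g := by
  have hnonneg : ∀ k, ∀ x ∈ s, 0 ≤ f k x := fun k x hx ↦ zero_le_one.trans (hone k x hx)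
  let tail (n : ℕ) (x : E) : ℝ := ∏ k ∈ Finset.range n, f (k + 1) x
  have tail_convexOn (n : ℕ) : ConvexOn ℝ s fun x ↦ tail n x - 1 :=
    (convexOn_finset_prod _ hzero.1 (fun k _ ↦ hconv k) (fun k _ ↦ hmono (k + 1))
      fun k _ ↦ hnonneg (k + 1)).add_const (-1)
  have tail_monotoneOn (n : ℕ) : MonotoneOn (fun x ↦ tail n x - 1) s :=
    (MonotoneOn.finsetProd (fun k _ ↦ hmono (k + 1)) fun k _ ↦ hnonneg (k + 1)).add_const (-1)
  have tail_sub_one_nonneg (n : ℕ) (x : E) (hx : x ∈ s) : 0 ≤ tail n x - 1 :=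
    sub_nonneg.2 <| Finset.one_le_prod fun k _ ↦ hone (k + 1) x hx
  -- Strictness survives the limit: `g - f 0` is still a limit of convex functions.
  have sub_convexOn : ConvexOn ℝ s (g - f 0) := by
    refine convexOn_of_tendsto (l := atTop) (f := fun n ↦ f 0 * fun x ↦ tail n x - 1)
      (fun n ↦ hzero.convexOn.mul (tail_convexOn n) (fun x hx ↦ hnonneg 0 x hx)
        (fun x hx ↦ tail_sub_one_nonneg n x hx) ((hmono 0).monovaryOn (tail_monotoneOn n)))
      fun x hx ↦ ?_
    refine (((hlim x hx).comp (tendsto_add_atTop_nat 1)).sub_const (f 0 x)).congr fun n ↦ ?_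
    simp only [Function.comp_apply, Finset.prod_range_succ', Pi.mul_apply, tail]
    ring
  simpa using hzero.add_convexOn sub_convexOn

end Product

section InvOneSubDiv

variable {c : ℝ}

theorem one_sub_div_pos_of_lt (hc : 0 < c) {u : ℝ} (hu : u < c) : 0 < 1 - u / c :=
  sub_pos.2 ((div_lt_one hc).2 hu)

theorem strictConvexOn_inv_one_sub_div (hc : 0 < c) :
    StrictConvexOn ℝ (Iio c) fun u ↦ (1 - u / c)⁻¹ := by
  have hinv : StrictConvexOn ℝ (Ioi 0) fun x : ℝ ↦ x⁻¹ := by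
    simpa using strictConvexOn_zpow (m := -1) (by simp) (by simp)
  refine ⟨convex_Iio c, fun u hu v hv huv a b ha hb hab ↦ ?_⟩
  have hne : 1 - u / c ≠ 1 - v / c := by simpa [div_left_inj' hc.ne'] using huv
  have haffine : 1 - (a • u + b • v) / c = a • (1 - u / c) + b • (1 - v / c) := by
    simp only [smul_eq_mul]
    linear_combination -hab
  simpa only [haffine] using
    hinv.2 (one_sub_div_pos_of_lt hc hu) (one_sub_div_pos_of_lt hc hv) hne ha hb hab

theorem monotoneOn_inv_one_sub_div (hc : 0 < c) : MonotoneOn (fun u ↦ (1 - u / c)⁻¹) (Iio c) := by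
  intro u _ v hv huv
  have := one_sub_div_pos_of_lt hc hv
  dsimp only
  gcongr

theorem one_le_inv_one_sub_div {u : ℝ} (hu : 0 ≤ u) (huc : u < c) : 1 ≤ (1 - u / c)⁻¹ :=
  (one_le_inv₀ (one_sub_div_pos_of_lt (hu.trans_lt huc) huc)).2 <|
    sub_le_self 1 (div_nonneg hu (hu.trans huc.le))

end InvOneSubDiv

theorem prod_range_two_mul {M : Type*} [CommMonoid M] (f : ℕ → M) (n : ℕ) :
    ∏ k ∈ Finset.range (2 * n), f k =
      (∏ k ∈ Finset.range n, f (2 * k)) * ∏ k ∈ Finset.range n, f (2 * k + 1) := by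
  induction n with
  | zero => simp
  | succ n ih =>
    simp only [mul_add_one, Finset.prod_range_succ, ih]
    ac_rfl

theorem tendsto_euler_cos_prod {x : ℝ} (hx : sin (π * x) ≠ 0) :
    Tendsto (fun n : ℕ ↦ ∏ k ∈ Finset.range n, (1 - x ^ 2 / ((k : ℝ) + 1 / 2) ^ 2)) atTop
      (𝓝 (cos (π * x))) := by
  have hdouble := (tendsto_euler_sin_prod (2 * x)).comp
    (tendsto_id.const_mul_atTop' (show 0 < 2 by simp))
  have hquot := (hdouble.div (tendsto_euler_sin_prod x) hx).div_const 2
  have hcos : sin (π * (2 * x)) / sin (π * x) / 2 = cos (π * x) := by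
    rw [mul_left_comm, sin_two_mul]
    field_simp
  rw [hcos] at hquot
  refine hquot.congr' ?_
  filter_upwards [(tendsto_euler_sin_prod x).eventually_ne hx] with n hn
  have hsplit : ∏ k ∈ Finset.range (2 * n), (1 - (2 * x) ^ 2 / ((k : ℝ) + 1) ^ 2) =
      (∏ k ∈ Finset.range n, (1 - x ^ 2 / ((k : ℝ) + 1 / 2) ^ 2)) *
        ∏ k ∈ Finset.range n, (1 - x ^ 2 / ((k : ℝ) + 1) ^ 2) := by
    rw [prod_range_two_mul]
    congr! 3 with k _ k _
    · push_cast
      field_simp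
    · push_cast
      field_simp
      ring
  simp only [Pi.div_apply, Function.comp_apply, id, hsplit]
  rw [div_div, div_eq_iff (mul_ne_zero hn two_ne_zero)]
  ring

theorem cos_pi_mul_pos {t : ℝ} (ht : |t| < 1 / 2) : 0 < cos (π * t) := by
  obtain ⟨hneg, hpos⟩ := abs_lt.1 ht
  exact cos_pos_of_mem_Ioo ⟨by nlinarith [pi_pos], by nlinarith [pi_pos]⟩

theorem tendsto_prod_inv_one_sub_div {t : ℝ} (ht : |t| < 1 / 2) :
    Tendsto (fun n : ℕ ↦ ∏ k ∈ Finset.range n, (1 - t ^ 2 / ((k : ℝ) + 3 / 2) ^ 2)⁻¹) atTop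
      (𝓝 ((1 - 4 * t ^ 2) / cos (π * t))) := by
  rcases eq_or_ne t 0 with rfl | ht₀
  · simp
  have hsin : sin (π * t) ≠ 0 := by
    obtain ⟨hneg, hpos⟩ := abs_lt.1 ht
    refine mt (sin_eq_zero_iff_of_lt_of_lt ?_ ?_).1 (mul_ne_zero pi_ne_zero ht₀) <;>
      nlinarith [pi_pos]
  have hcos := (tendsto_const_nhds (x := 1 - 4 * t ^ 2)).div
    ((tendsto_euler_cos_prod hsin).comp (tendsto_add_atTop_nat 1)) (cos_pi_mul_pos ht).ne'
  refine hcos.congr fun n ↦ ?_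
  have hfirst : 1 - 4 * t ^ 2 ≠ 0 := by nlinarith [sq_abs t, abs_nonneg t]
  have hzero : 1 - t ^ 2 / (((0 : ℕ) : ℝ) + 1 / 2) ^ 2 = 1 - 4 * t ^ 2 := by
    norm_num
    ring
  simp only [Pi.div_apply, Function.comp_apply, Finset.prod_range_succ', hzero,
    Finset.prod_inv_distrib]
  rw [div_mul_cancel_right₀ hfirst]
  congr! 5 with k
  push_cast
  ring

theorem strictConvexOn_one_sub_four_mul_div_cos_sqrt :
    StrictConvexOn ℝ (Ico 0 (1 / 4)) fun u ↦ (1 - 4 * u) / cos (π * √u) := by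
  have hpole (k : ℕ) : (0 : ℝ) < ((k : ℝ) + 3 / 2) ^ 2 := by positivity
  have hlt (k : ℕ) {u : ℝ} (hu : u ∈ Ico 0 (1 / 4)) : u < ((k : ℝ) + 3 / 2) ^ 2 := by
    nlinarith [hu.2, (Nat.cast_nonneg k : (0 : ℝ) ≤ k)]
  have hconv (k : ℕ) :
      StrictConvexOn ℝ (Ico 0 (1 / 4)) fun u ↦ (1 - u / ((k : ℝ) + 3 / 2) ^ 2)⁻¹ :=
    (strictConvexOn_inv_one_sub_div (hpole k)).subset (fun _ ↦ hlt k) (convex_Ico 0 (1 / 4))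
  refine strictConvexOn_of_tendsto_prod (hconv 0) (fun k ↦ (hconv (k + 1)).convexOn)
    (fun k ↦ (monotoneOn_inv_one_sub_div (hpole k)).mono fun _ ↦ hlt k)
    (fun k u hu ↦ one_le_inv_one_sub_div hu.1 (hlt k hu)) fun u hu ↦ ?_
  have hsqrt : |√u| < 1 / 2 := by
    rw [abs_of_nonneg (sqrt_nonneg u), sqrt_lt' (by simp)]
    linarith [hu.2]
  simpa only [sq_sqrt hu.1] using tendsto_prod_inv_one_sub_div hsqrt

section Image

variable {α β : Type*} [LinearOrder α] [DenselyOrdered α] [TopologicalSpace α] [OrderTopology α]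
  [LinearOrder β] [TopologicalSpace β] [OrderClosedTopology β] {f : α → β} {a b : α} {c d : β}

theorem lt_of_strictMonoOn_of_tendsto_nhdsGT (hf : StrictMonoOn f (Ioo a b))
    (hlim : Tendsto f (𝓝[>] a) (𝓝 c)) {x : α} (hx : x ∈ Ioo a b) : c < f x := by
  obtain ⟨y, hay, hyx⟩ := exists_between hx.1
  have hy : y ∈ Ioo a b := ⟨hay, hyx.trans hx.2⟩
  have : (𝓝[>] a).NeBot := nhdsGT_neBot_of_exists_gt ⟨x, hx.1⟩
  refine (le_of_tendsto hlim ?_).trans_lt (hf hy hx hyx)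
  filter_upwards [Ioo_mem_nhdsGT hay] with z hz
  exact (hf ⟨hz.1, hz.2.trans hy.2⟩ hy hz.2).le

theorem lt_of_strictMonoOn_of_tendsto_nhdsLT (hf : StrictMonoOn f (Ioo a b))
    (hlim : Tendsto f (𝓝[<] b) (𝓝 d)) {x : α} (hx : x ∈ Ioo a b) : f x < d := by
  obtain ⟨y, hxy, hyb⟩ := exists_between hx.2
  have hy : y ∈ Ioo a b := ⟨hx.1.trans hxy, hyb⟩
  have : (𝓝[<] b).NeBot := nhdsLT_neBot_of_exists_lt ⟨x, hx.2⟩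
  refine (hf hx hy hxy).trans_le (ge_of_tendsto hlim ?_)
  filter_upwards [Ioo_mem_nhdsLT hyb] with z hz
  exact (hf hy ⟨hy.1.trans hz.1, hz.2⟩ hz.1).le

end Image

theorem image_Ioo_eq_of_tendsto {α β : Type*} [ConditionallyCompleteLinearOrder α]
    [DenselyOrdered α] [TopologicalSpace α] [OrderTopology α] [LinearOrder β] [TopologicalSpace β]
    [OrderClosedTopology β] {f : α → β} {a b : α} {c d : β} (hab : a < b)
    (hmono : StrictMonoOn f (Ioo a b)) (hcont : ContinuousOn f (Ioo a b))
    (hleft : Tendsto f (𝓝[>] a) (𝓝 c)) (hright : Tendsto f (𝓝[<] b) (𝓝 d)) :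
    f '' Ioo a b = Ioo c d := by
  have : (𝓝[>] a).NeBot := nhdsGT_neBot_of_exists_gt ⟨b, hab⟩
  have : (𝓝[<] b).NeBot := nhdsLT_neBot_of_exists_lt ⟨a, hab⟩
  refine Subset.antisymm (image_subset_iff.2 fun x hx ↦
    ⟨lt_of_strictMonoOn_of_tendsto_nhdsGT hmono hleft hx,
      lt_of_strictMonoOn_of_tendsto_nhdsLT hmono hright hx⟩) ?_
  exact isPreconnected_Ioo.intermediate_value_Ioo (le_principal_iff.2 (Ioo_mem_nhdsGT hab))
    (le_principal_iff.2 (Ioo_mem_nhdsLT hab)) hcont hleft hright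

/-- The function `h` of the theorem. For `t ∈ (0, 1/2)` it is the coefficient `c` with
`cos (πt) = (1 - 4t²) / (1 + ct²)`, so bounds of this shape on the cosine are bounds
on `h`. -/
noncomputable def redhefferCoeff (t : ℝ) : ℝ :=
  (1 - 4 * t ^ 2) / (t ^ 2 * cos (π * t)) - 1 / t ^ 2

section RedhefferCoeff

variable {t a b : ℝ}

theorem cos_pi_mul_pos_of_mem_Ioo (ht : t ∈ Ioo 0 (1 / 2)) : 0 < cos (π * t) :=
  cos_pi_mul_pos (by simpa [abs_of_pos ht.1] using ht.2)

theorem strictMonoOn_redhefferCoeff : StrictMonoOn redhefferCoeff (Ioo 0 (1 / 2)) := by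
  have hsecant : ∀ t ∈ Ioo (0 : ℝ) (1 / 2), redhefferCoeff t =
      ((1 - 4 * t ^ 2) / cos (π * √(t ^ 2)) - (1 - 4 * 0) / cos (π * √0)) / (t ^ 2 - 0) := by
    intro t ht
    have := ht.1.ne'
    have := (cos_pi_mul_pos_of_mem_Ioo ht).ne'
    simp only [redhefferCoeff, sqrt_sq ht.1.le, sqrt_zero, mul_zero, cos_zero, sub_zero, div_one]
    field_simp
  have hsq : ∀ t ∈ Ioo (0 : ℝ) (1 / 2), t ^ 2 ∈ Ico (0 : ℝ) (1 / 4) := fun t ht ↦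
    ⟨sq_nonneg t, by nlinarith [ht.1, ht.2]⟩
  intro s hs t ht hst
  rw [hsecant s hs, hsecant t ht]
  exact strictConvexOn_one_sub_four_mul_div_cos_sqrt.secant_strict_mono (by simp) (hsq s hs)
    (hsq t ht) (pow_pos hs.1 2).ne' (pow_pos ht.1 2).ne' (pow_lt_pow_left₀ hst hs.1.le two_ne_zero)

theorem continuousOn_redhefferCoeff : ContinuousOn redhefferCoeff (Ioo 0 (1 / 2)) := by
  unfold redhefferCoeff
  refine ContinuousOn.sub (ContinuousOn.div (by fun_prop) (by fun_prop) fun t ht ↦ ?_)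
    (ContinuousOn.div (by fun_prop) (by fun_prop) fun t ht ↦ (pow_pos ht.1 2).ne')
  exact (mul_pos (pow_pos ht.1 2) (cos_pi_mul_pos_of_mem_Ioo ht)).ne'

theorem tendsto_redhefferCoeff_nhdsGT_zero :
    Tendsto redhefferCoeff (𝓝[>] 0) (𝓝 ((π ^ 2 - 8) / 2)) := by
  have hcont : ContinuousAt
      (fun t ↦ (π ^ 2 / 2 * sinc (π / 2 * t) ^ 2 - 4) / cos (π * t)) 0 :=
    ContinuousAt.div (by fun_prop) (by fun_prop) (by simp)
  have hlim := hcont.tendsto.mono_left (nhdsWithin_le_nhds (s := Ioi 0))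
  have hvalue : (π ^ 2 / 2 * sinc (π / 2 * 0) ^ 2 - 4) / cos (π * 0) = (π ^ 2 - 8) / 2 := by
    simp only [mul_zero, sinc_zero, cos_zero]
    ring
  rw [hvalue] at hlim
  refine hlim.congr' ?_
  filter_upwards [Ioo_mem_nhdsGT one_half_pos] with t ht
  have := ht.1.ne'
  have := (cos_pi_mul_pos_of_mem_Ioo ht).ne'
  have hhalf : sin (π / 2 * t) ^ 2 = (1 - cos (π * t)) / 2 := by
    rw [sin_sq_eq_half_sub]
    ring_nf
  rw [redhefferCoeff, sinc_of_ne_zero (by positivity), div_pow, hhalf]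
  field_simp
  ring

theorem tendsto_redhefferCoeff_nhdsLT_half :
    Tendsto redhefferCoeff (𝓝[<] (1 / 2)) (𝓝 (16 / π - 4)) := by
  have hcont : ContinuousAt
      (fun t ↦ 4 * (1 / 2 + t) / (t ^ 2 * (π * sinc (π * (1 / 2 - t)))) - 1 / t ^ 2) (1 / 2) :=
    (ContinuousAt.div (by fun_prop) (by fun_prop) (by simp)).sub
      (ContinuousAt.div (by fun_prop) (by fun_prop) (by simp))
  have hlim := hcont.tendsto.mono_left (nhdsWithin_le_nhds (s := Iio (1 / 2)))
  have hvalue : 4 * (1 / 2 + 1 / 2) / ((1 / 2) ^ 2 * (π * sinc (π * (1 / 2 - 1 / 2)))) -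
      1 / (1 / 2) ^ 2 = 16 / π - 4 := by
    simp only [sub_self, mul_zero, sinc_zero]
    field_simp
    ring
  rw [hvalue] at hlim
  refine hlim.congr' ?_
  filter_upwards [Ioo_mem_nhdsLT one_half_pos] with t ht
  have := ht.1.ne'
  have hgap : 1 / 2 - t ≠ 0 := (sub_pos.2 ht.2).ne'
  have hreflect : π * sinc (π * (1 / 2 - t)) = cos (π * t) / (1 / 2 - t) := by
    rw [sinc_of_ne_zero (by positivity), ← cos_pi_div_two_sub]
    field_simp
    ring_nf
  rw [redhefferCoeff, hreflect, mul_div_assoc', div_div_eq_mul_div]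
  ring

theorem image_redhefferCoeff :
    redhefferCoeff '' Ioo 0 (1 / 2) = Ioo ((π ^ 2 - 8) / 2) (16 / π - 4) :=
  image_Ioo_eq_of_tendsto (by simp) strictMonoOn_redhefferCoeff continuousOn_redhefferCoeff
    tendsto_redhefferCoeff_nhdsGT_zero tendsto_redhefferCoeff_nhdsLT_half

theorem lt_redhefferCoeff (ht : t ∈ Ioo 0 (1 / 2)) : (π ^ 2 - 8) / 2 < redhefferCoeff t :=
  (image_redhefferCoeff.subset (mem_image_of_mem _ ht)).1

theorem redhefferCoeff_lt (ht : t ∈ Ioo 0 (1 / 2)) : redhefferCoeff t < 16 / π - 4 :=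
  (image_redhefferCoeff.subset (mem_image_of_mem _ ht)).2

theorem one_sub_four_mul_sq_eq_redhefferCoeff_mul_cos (ht : t ≠ 0) (hcos : cos (π * t) ≠ 0) :
    1 - 4 * t ^ 2 = (1 + redhefferCoeff t * t ^ 2) * cos (π * t) := by
  rw [redhefferCoeff]
  generalize cos (π * t) = c at hcos ⊢
  field_simp
  ring

theorem redheffer_quotient_pi_mul (a t : ℝ) :
    (π ^ 2 - 4 * (π * t) ^ 2) / (π ^ 2 + a * (π * t) ^ 2) = (1 - 4 * t ^ 2) / (1 + a * t ^ 2) := by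
  rw [← mul_div_mul_left (1 - 4 * t ^ 2) (1 + a * t ^ 2) (pow_ne_zero 2 pi_ne_zero)]
  ring_nf

theorem redheffer_quotient_lt_cos_iff (ht : t ∈ Ioo 0 (1 / 2)) (ha : 0 < 1 + a * t ^ 2) :
    (1 - 4 * t ^ 2) / (1 + a * t ^ 2) < cos (π * t) ↔ redhefferCoeff t < a := by
  have hcos := cos_pi_mul_pos_of_mem_Ioo ht
  rw [div_lt_iff₀ ha, one_sub_four_mul_sq_eq_redhefferCoeff_mul_cos ht.1.ne' hcos.ne', mul_comm,
    mul_lt_mul_iff_right₀ hcos, add_lt_add_iff_left, mul_lt_mul_iff_left₀ (pow_pos ht.1 2)]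

theorem cos_lt_redheffer_quotient_iff (ht : t ∈ Ioo 0 (1 / 2)) (hb : 0 < 1 + b * t ^ 2) :
    cos (π * t) < (1 - 4 * t ^ 2) / (1 + b * t ^ 2) ↔ b < redhefferCoeff t := by
  have hcos := cos_pi_mul_pos_of_mem_Ioo ht
  rw [lt_div_iff₀ hb, one_sub_four_mul_sq_eq_redhefferCoeff_mul_cos ht.1.ne' hcos.ne', mul_comm,
    mul_lt_mul_iff_left₀ hcos, add_lt_add_iff_left, mul_lt_mul_iff_left₀ (pow_pos ht.1 2)]

theorem forall_pi_mul_mem_Ioo_iff {p : ℝ → Prop} :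
    (∀ x, 0 < x → x < π / 2 → p x) ↔ ∀ t ∈ Ioo 0 (1 / 2), p (π * t) := by
  have himage : (π * ·) '' Ioo 0 (1 / 2) = Ioo 0 (π / 2) := by
    rw [image_mul_left_Ioo pi_pos, mul_zero, mul_one_div]
  rw [← forall_mem_image (f := (π * ·)), himage]
  simp only [mem_Ioo, and_imp]

theorem forall_redheffer_quotient_lt_cos_iff :
    (∀ x, 0 < x → x < π / 2 → (π ^ 2 - 4 * x ^ 2) / (π ^ 2 + a * x ^ 2) < cos x) ↔
      16 / π - 4 ≤ a := by
  simp only [forall_pi_mul_mem_Ioo_iff, redheffer_quotient_pi_mul]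
  have hβ : 0 < (π ^ 2 - 8) / 2 := by nlinarith [pi_gt_three]
  refine ⟨fun h ↦ ?_, fun ha t ht ↦ ?_⟩
  · -- For `a < 0` the denominator may fail to be positive, but not near `t = 0`.
    have ha : 0 < a := by
      have hlim : Tendsto (fun t : ℝ ↦ 1 + a * t ^ 2) (𝓝[>] 0) (𝓝 (1 + a * 0 ^ 2)) :=
        Continuous.continuousWithinAt (by fun_prop)
      obtain ⟨t, hden, ht⟩ := ((hlim.eventually_const_lt (u := 0) (by simp)).and
        (Ioo_mem_nhdsGT one_half_pos)).exists
      exact hβ.trans <| (lt_redhefferCoeff ht).trans <|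
        (redheffer_quotient_lt_cos_iff ht hden).1 (h t ht)
    refine le_of_tendsto tendsto_redhefferCoeff_nhdsLT_half ?_
    filter_upwards [Ioo_mem_nhdsLT one_half_pos] with t ht
    exact ((redheffer_quotient_lt_cos_iff ht (by positivity)).1 (h t ht)).le
  · have hlt := (redhefferCoeff_lt ht).trans_le ha
    have ha₀ : 0 < a := hβ.trans ((lt_redhefferCoeff ht).trans hlt)
    exact (redheffer_quotient_lt_cos_iff ht (by positivity)).2 hlt

theorem forall_cos_lt_redheffer_quotient_iff :
    (∀ x, 0 < x → x < π / 2 → cos x < (π ^ 2 - 4 * x ^ 2) / (π ^ 2 + b * x ^ 2)) ↔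
      b ∈ Icc (-4) ((π ^ 2 - 8) / 2) := by
  simp only [forall_pi_mul_mem_Ioo_iff, redheffer_quotient_pi_mul]
  refine ⟨fun h ↦ ?_, fun hb t ht ↦ ?_⟩
  · have hden : ∀ t ∈ Ioo (0 : ℝ) (1 / 2), 0 < 1 + b * t ^ 2 := fun t ht ↦
      (div_pos_iff_of_pos_left (by nlinarith [ht.1, ht.2])).1 <|
        (cos_pi_mul_pos_of_mem_Ioo ht).trans (h t ht)
    constructor
    · have hlim : Tendsto (fun t : ℝ ↦ 1 + b * t ^ 2) (𝓝[<] (1 / 2)) (𝓝 (1 + b * (1 / 2) ^ 2)) :=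
        Continuous.continuousWithinAt (by fun_prop)
      have hhalf : 0 ≤ 1 + b * (1 / 2) ^ 2 := by
        refine ge_of_tendsto hlim ?_
        filter_upwards [Ioo_mem_nhdsLT one_half_pos] with t ht
        exact (hden t ht).le
      linarith
    · refine ge_of_tendsto tendsto_redhefferCoeff_nhdsGT_zero ?_
      filter_upwards [Ioo_mem_nhdsGT one_half_pos] with t ht
      exact ((cos_lt_redheffer_quotient_iff ht (hden t ht)).1 (h t ht)).le
  · have hden : 0 < 1 + b * t ^ 2 := by nlinarith [hb.1, ht.1, ht.2]
    exact (cos_lt_redheffer_quotient_iff ht hden).2 (hb.2.trans_lt (lt_redhefferCoeff ht))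

end RedhefferCoeff

theorem redheffer_cos_refinement :
    StrictMonoOn
      (fun t : ℝ => (1 - 4 * t ^ 2) / (t ^ 2 * Real.cos (Real.pi * t)) - 1 / t ^ 2)
      (Set.Ioo 0 (1 / 2)) ∧
    (fun t : ℝ => (1 - 4 * t ^ 2) / (t ^ 2 * Real.cos (Real.pi * t)) - 1 / t ^ 2) ''
        Set.Ioo 0 (1 / 2) = Set.Ioo ((Real.pi ^ 2 - 8) / 2) (16 / Real.pi - 4) ∧
    (∀ x : ℝ, 0 < x → x < Real.pi / 2 →
      (Real.pi ^ 2 - 4 * x ^ 2) / (Real.pi ^ 2 + (16 / Real.pi - 4) * x ^ 2) < Real.cos x ∧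
      Real.cos x < (Real.pi ^ 2 - 4 * x ^ 2) / (Real.pi ^ 2 + ((Real.pi ^ 2 - 8) / 2) * x ^ 2)) ∧
    (∀ a : ℝ,
      (∀ x : ℝ, 0 < x → x < Real.pi / 2 →
        (Real.pi ^ 2 - 4 * x ^ 2) / (Real.pi ^ 2 + a * x ^ 2) < Real.cos x) →
      16 / Real.pi - 4 ≤ a) ∧
    (∀ b : ℝ,
      (∀ x : ℝ, 0 < x → x < Real.pi / 2 →
        Real.cos x < (Real.pi ^ 2 - 4 * x ^ 2) / (Real.pi ^ 2 + b * x ^ 2)) →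
      b ≤ (Real.pi ^ 2 - 8) / 2) := by
  have hβ : -4 ≤ (π ^ 2 - 8) / 2 := by linarith [sq_nonneg π]
  exact ⟨strictMonoOn_redhefferCoeff, image_redhefferCoeff,
    fun x hx hx' ↦ ⟨forall_redheffer_quotient_lt_cos_iff.2 le_rfl x hx hx',
      forall_cos_lt_redheffer_quotient_iff.2 ⟨hβ, le_rfl⟩ x hx hx'⟩,
    fun _ ↦ forall_redheffer_quotient_lt_cos_iff.1,
    fun _ h ↦ (forall_cos_lt_redheffer_quotient_iff.1 h).2⟩
end

section
/- For all real a with 0 < a < 1 and all real x > 0, the digamma function satisfies (1 − a)/(x + a) < ψ(1 + x) − ψ(x + a). -/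
/-- The digamma function ψ(x) = Γ'(x)/Γ(x). -/
noncomputable def digamma (x : ℝ) : ℝ := deriv Real.Gamma x / Real.Gamma x

/-!
Log-convexity of `Γ` traps `log x` between `ψ x` and `ψ (x + 1) = ψ x + 1 / x`, so
`ψ x - log x → 0` at infinity. Iterating the recurrence then exhibits `ψ` on `(0, ∞)` as the
pointwise limit of the concave functions `log (x + n) - ∑ k < n, 1 / (x + k)`. Hence `ψ` is
concave, and `ψ x = ψ (x + 1) - 1 / x` is even strictly concave. Since `1 + x` divides the interval
from `y = x + a` to `y + 1` in the ratio `1 - a : a`, strict concavity gives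
`ψ (1 + x) > a ψ y + (1 - a) ψ (y + 1) = ψ y + (1 - a) / y`.
-/

open Set Filter Topology

section Concavity

theorem concaveOn_of_tendsto {ι 𝕜 E β : Type*} [Semiring 𝕜] [PartialOrder 𝕜] [PartialOrder β]
    [TopologicalSpace β] [OrderClosedTopology β] [AddCommMonoid E] [AddCommMonoid β] [SMul 𝕜 E]
    [SMul 𝕜 β] [ContinuousConstSMul 𝕜 β] [ContinuousAdd β] {l : Filter ι} [l.NeBot] {s : Set E}
    {F : ι → E → β} {f : E → β} (hF : ∀ i, ConcaveOn 𝕜 s (F i))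
    (hlim : ∀ x ∈ s, Tendsto (F · x) l (𝓝 (f x))) : ConcaveOn 𝕜 s f := by
  obtain ⟨i⟩ := l.nonempty_of_neBot
  refine ⟨(hF i).1, fun x hx y hy a b ha hb hab ↦ ?_⟩
  exact le_of_tendsto_of_tendsto' (((hlim x hx).const_smul a).add ((hlim y hy).const_smul b))
    (hlim _ ((hF i).1 hx hy ha hb hab)) fun j ↦ (hF j).2 hx hy ha hb hab

theorem concaveOn_Ioi_comp_add_const {f : ℝ → ℝ} {b c : ℝ} (hf : ConcaveOn ℝ (Ioi b) f)
    (hc : 0 ≤ c) : ConcaveOn ℝ (Ioi b) fun x ↦ f (x + c) :=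
  (hf.translate_left c).subset (fun _ hx ↦ lt_add_of_nonneg_of_lt hc hx) (convex_Ioi b)

theorem strictConvexOn_inv_Ioi : StrictConvexOn ℝ (Ioi 0) fun x : ℝ ↦ x⁻¹ := by
  simpa only [zpow_neg_one] using strictConvexOn_zpow (m := -1) (by decide) (by decide)

theorem concaveOn_log_add_sub_sum_inv (n : ℕ) :
    ConcaveOn ℝ (Ioi 0) fun x : ℝ ↦
      Real.log (x + n) - ∑ k ∈ Finset.range n, (x + k)⁻¹ := by
  have concaveOn_neg_inv (k : ℕ) : ConcaveOn ℝ (Ioi 0) fun x : ℝ ↦ -(x + k)⁻¹ :=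
    concaveOn_Ioi_comp_add_const strictConvexOn_inv_Ioi.convexOn.neg k.cast_nonneg
  have concaveOn_sum :
      ConcaveOn ℝ (Ioi 0) (∑ k ∈ Finset.range n, fun x : ℝ ↦ -(x + k)⁻¹) :=
    Finset.sum_induction _ (ConcaveOn ℝ (Ioi 0)) (fun _ _ ↦ .add)
      (concaveOn_const 0 (convex_Ioi 0)) fun k _ ↦ concaveOn_neg_inv k
  have concaveOn_log := concaveOn_Ioi_comp_add_const strictConcaveOn_log_Ioi.concaveOn n.cast_nonneg
  refine (concaveOn_log.add concaveOn_sum).congr fun x _ ↦ ?_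
  simp only [Pi.add_apply, Finset.sum_apply, Finset.sum_neg_distrib, sub_eq_add_neg]

end Concavity

section Recurrence

theorem ne_neg_natCast_of_pos {x : ℝ} (hx : 0 < x) (m : ℕ) : x ≠ -m :=
  ((neg_nonpos.2 m.cast_nonneg).trans_lt hx).ne'

theorem digamma_add_one {x : ℝ} (hx : ∀ m : ℕ, x ≠ -m) : digamma (x + 1) = digamma x + x⁻¹ := by
  have hx0 : x ≠ 0 := by simpa using hx 0
  have Gamma_add_one_near : (fun t ↦ Real.Gamma (t + 1)) =ᶠ[𝓝 x] fun t ↦ t * Real.Gamma t :=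
    (eventually_ne_nhds hx0).mono fun _ ↦ Real.Gamma_add_one
  calc
    digamma (x + 1) = logDeriv (fun t ↦ Real.Gamma (t + 1)) x := by
      rw [logDeriv_apply, deriv_comp_add_const, digamma]
    _ = logDeriv (fun t ↦ t * Real.Gamma t) x :=
      (logDeriv_congr_nhds Gamma_add_one_near).self_of_nhds
    _ = x⁻¹ + digamma x := by
      rw [logDeriv_mul x hx0 (Real.Gamma_ne_zero hx) differentiableAt_fun_id
        (Real.differentiableAt_Gamma hx), logDeriv_id', one_div, logDeriv_apply, digamma]
    _ = digamma x + x⁻¹ := add_comm _ _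

theorem digamma_add_natCast {x : ℝ} (hx : ∀ m : ℕ, x ≠ -m) (n : ℕ) :
    digamma (x + n) = digamma x + ∑ k ∈ Finset.range n, (x + k)⁻¹ := by
  induction n with
  | zero => simp
  | succ n ih =>
    have hxn (m : ℕ) : x + n ≠ -m := fun h ↦ hx (n + m) (by push_cast; linarith)
    rw [Nat.cast_succ, ← add_assoc, digamma_add_one hxn, ih, Finset.sum_range_succ, add_assoc]

end Recurrence

section Asymptotics

variable {x : ℝ}

theorem hasDerivAt_log_Gamma (hx : 0 < x) :
    HasDerivAt (Real.log ∘ Real.Gamma) (digamma x) x :=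
  (Real.differentiableAt_Gamma (ne_neg_natCast_of_pos hx)).hasDerivAt.log
    (Real.Gamma_pos_of_pos hx).ne'

theorem slope_log_Gamma_add_one (hx : 0 < x) :
    slope (Real.log ∘ Real.Gamma) x (x + 1) = Real.log x := by
  rw [slope_def_field, Function.comp_apply, Function.comp_apply, Real.Gamma_add_one hx.ne',
    Real.log_mul hx.ne' (Real.Gamma_pos_of_pos hx).ne', add_sub_cancel_right,
    add_sub_cancel_left, div_one]

theorem digamma_le_log (hx : 0 < x) : digamma x ≤ Real.log x :=
  slope_log_Gamma_add_one hx ▸ Real.convexOn_log_Gamma.le_slope_of_hasDerivAt hx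
    (add_pos hx one_pos) (lt_add_one x) (hasDerivAt_log_Gamma hx)

theorem log_le_digamma_add_one (hx : 0 < x) : Real.log x ≤ digamma (x + 1) :=
  have hx1 : 0 < x + 1 := add_pos hx one_pos
  slope_log_Gamma_add_one hx ▸ Real.convexOn_log_Gamma.slope_le_of_hasDerivAt hx
    hx1 (lt_add_one x) (hasDerivAt_log_Gamma hx1)

theorem tendsto_log_sub_digamma_atTop :
    Tendsto (fun x ↦ Real.log x - digamma x) atTop (𝓝 0) := by
  refine tendsto_of_tendsto_of_tendsto_of_le_of_le' tendsto_const_nhds tendsto_inv_atTop_zero ?_ ?_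
  · filter_upwards [eventually_gt_atTop 0] with x hx
    exact sub_nonneg.2 (digamma_le_log hx)
  · filter_upwards [eventually_gt_atTop 0] with x hx
    rw [sub_le_iff_le_add', ← digamma_add_one (ne_neg_natCast_of_pos hx)]
    exact log_le_digamma_add_one hx

theorem tendsto_log_add_sub_sum_inv (hx : ∀ m : ℕ, x ≠ -m) :
    Tendsto (fun n : ℕ ↦ Real.log (x + n) - ∑ k ∈ Finset.range n, (x + k)⁻¹) atTop
      (𝓝 (digamma x)) := by
  have error_tendsto : Tendsto (fun n : ℕ ↦ Real.log (x + n) - digamma (x + n)) atTop (𝓝 0) :=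
    tendsto_log_sub_digamma_atTop.comp
      (tendsto_atTop_add_const_left _ x tendsto_natCast_atTop_atTop)
  refine (zero_add (digamma x) ▸ error_tendsto.add_const (digamma x)).congr fun n ↦ ?_
  rw [digamma_add_natCast hx]
  ring

end Asymptotics

theorem concaveOn_digamma : ConcaveOn ℝ (Ioi 0) digamma :=
  concaveOn_of_tendsto concaveOn_log_add_sub_sum_inv fun _ hx ↦
    tendsto_log_add_sub_sum_inv (ne_neg_natCast_of_pos hx)

theorem strictConcaveOn_digamma : StrictConcaveOn ℝ (Ioi 0) digamma := by
  refine ((concaveOn_Ioi_comp_add_const concaveOn_digamma zero_le_one).add_strictConcaveOn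
    strictConvexOn_inv_Ioi.neg).congr fun x hx ↦ ?_
  simp only [Pi.add_apply, Pi.neg_apply, digamma_add_one (ne_neg_natCast_of_pos hx),
    add_neg_cancel_right]

theorem digamma_difference_lower_bound_general (a x : ℝ) (ha0 : 0 < a) (ha1 : a < 1)
    (hxa : 0 < x + a) : (1 - a) / (x + a) < digamma (1 + x) - digamma (x + a) := by
  rw [lt_sub_iff_add_lt']
  calc
    digamma (x + a) + (1 - a) / (x + a)
        = a * digamma (x + a) + (1 - a) * digamma (x + a + 1) := by
      rw [digamma_add_one (ne_neg_natCast_of_pos hxa)]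
      ring
    _ < digamma (a * (x + a) + (1 - a) * (x + a + 1)) :=
      strictConcaveOn_digamma.2 hxa (add_pos hxa one_pos) (lt_add_one _).ne ha0 (sub_pos.2 ha1)
        (add_sub_cancel a 1)
    _ = digamma (1 + x) := by ring_nf

theorem digamma_difference_lower_bound (a x : ℝ) (ha0 : 0 < a) (ha1 : a < 1) (hx : 0 < x) :
    (1 - a) / (x + a) < digamma (1 + x) - digamma (x + a) :=
  digamma_difference_lower_bound_general a x ha0 ha1 (add_pos hx ha0)
end

section
/- For all real x > 1 and all real y with 0 < y < 1, the gamma function satisfies Γ(1 + x)·Γ(1 + y)/Γ(1 + x + y) > 1/(1 + x·y). -/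
/-!
By Euler's limit formula, `Γ(1 + a + b) / (Γ(1 + a) Γ(1 + b))` is the infinite product over
`k ≥ 1` of `(k + a)(k + b) / (k (k + a + b)) = 1 + ab / (k (k + a + b))`. Its factors increase with
the product `ab` and decrease with the sum `a + b`. The pairs `(x, y)` and `(1, xy)` have the same
product, and `(x - 1)(1 - y) > 0` says that the first has the larger sum; for the second pair the
Gamma ratio is exactly `1 + xy`.
-/

open Filter Topology Finset
open Real (Gamma log)
open Real.BohrMollerup (logGammaSeq tendsto_log_gamma)

/-- The normalizing terms `x log n + log n!` of Euler's formula cancel because `p + q = r + s`. -/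
theorem sum_log_quotient_eq_logGammaSeq {p q r s : ℝ} (hp : 0 < p) (hq : 0 < q) (hr : 0 < r)
    (hs : 0 < s) (hsum : p + q = r + s) (n : ℕ) :
    ∑ k ∈ range (n + 1), log ((p + k) * (q + k) / ((r + k) * (s + k))) =
      logGammaSeq r n + logGammaSeq s n - (logGammaSeq p n + logGammaSeq q n) := by
  have log_factor (k : ℕ) : log ((p + k) * (q + k) / ((r + k) * (s + k))) =
      log (p + k) + log (q + k) - (log (r + k) + log (s + k)) := by
    rw [Real.log_div (by positivity) (by positivity), Real.log_mul (by positivity) (by positivity),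
      Real.log_mul (by positivity) (by positivity)]
  simp only [log_factor, sum_sub_distrib, sum_add_distrib, logGammaSeq]
  linear_combination log n * hsum

theorem tendsto_sum_log_quotient_log_Gamma {p q r s : ℝ} (hp : 0 < p) (hq : 0 < q) (hr : 0 < r)
    (hs : 0 < s) (hsum : p + q = r + s) :
    Tendsto (fun n : ℕ ↦ ∑ k ∈ range n, log ((p + k) * (q + k) / ((r + k) * (s + k)))) atTop
      (𝓝 (log (Gamma r * Gamma s / (Gamma p * Gamma q)))) := by
  have hΓ {t : ℝ} (ht : 0 < t) : Gamma t ≠ 0 := (Real.Gamma_pos_of_pos ht).ne'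
  rw [← tendsto_add_atTop_iff_nat 1,
    Real.log_div (mul_ne_zero (hΓ hr) (hΓ hs)) (mul_ne_zero (hΓ hp) (hΓ hq)),
    Real.log_mul (hΓ hr) (hΓ hs), Real.log_mul (hΓ hp) (hΓ hq)]
  simp only [sum_log_quotient_eq_logGammaSeq hp hq hr hs hsum]
  exact ((tendsto_log_gamma hr).add (tendsto_log_gamma hs)).sub
    ((tendsto_log_gamma hp).add (tendsto_log_gamma hq))

theorem hasSum_log_Gamma_add_div_Gamma_mul_Gamma {a b : ℝ} (ha : 0 ≤ a) (hb : 0 ≤ b) :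
    HasSum (fun k : ℕ ↦ log (1 + a * b / ((1 + k) * (1 + k + (a + b)))))
      (log (Gamma (1 + a + b) / (Gamma (1 + a) * Gamma (1 + b)))) := by
  have factor_eq (k : ℕ) : 1 + a * b / ((1 + k) * (1 + k + (a + b))) =
      (1 + a + k) * (1 + b + k) / ((1 + a + b + k) * (1 + k)) := by
    have : 1 + a + b + (k : ℝ) ≠ 0 := by positivity
    field_simp
    ring
  rw [hasSum_iff_tendsto_nat_of_nonneg fun k ↦
    Real.log_nonneg (le_add_of_nonneg_right (by positivity))]
  simpa only [factor_eq, Real.Gamma_one, mul_one] using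
    tendsto_sum_log_quotient_log_Gamma (p := 1 + a) (q := 1 + b) (r := 1 + a + b) (s := 1)
      (by positivity) (by positivity) (by positivity) one_pos (by ring)

theorem Gamma_mul_Gamma_div_Gamma_add_lt {a b c d : ℝ} (ha : 0 ≤ a) (hb : 0 ≤ b) (hc : 0 < c)
    (hd : 0 < d) (hmul : a * b ≤ c * d) (hadd : c + d < a + b) :
    Gamma (1 + c) * Gamma (1 + d) / Gamma (1 + c + d) <
      Gamma (1 + a) * Gamma (1 + b) / Gamma (1 + a + b) := by
  have factor_lt (k : ℕ) : 1 + a * b / ((1 + k) * (1 + k + (a + b))) <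
      1 + c * d / ((1 + k) * (1 + k + (c + d))) := by
    gcongr 1 + ?_
    calc a * b / ((1 + k) * (1 + k + (a + b)))
        ≤ c * d / ((1 + k) * (1 + k + (a + b))) := by gcongr
      _ < c * d / ((1 + k) * (1 + k + (c + d))) := by gcongr
  have log_factor_lt (k : ℕ) : log (1 + a * b / ((1 + k) * (1 + k + (a + b)))) <
      log (1 + c * d / ((1 + k) * (1 + k + (c + d)))) :=
    Real.log_lt_log (by positivity) (factor_lt k)
  have log_lt := hasSum_lt (fun k ↦ (log_factor_lt k).le) (log_factor_lt 0)
    (hasSum_log_Gamma_add_div_Gamma_mul_Gamma ha hb)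
    (hasSum_log_Gamma_add_div_Gamma_mul_Gamma hc.le hd.le)
  have ratio_pos {u v : ℝ} (hu : 0 ≤ u) (hv : 0 ≤ v) :
      0 < Gamma (1 + u + v) / (Gamma (1 + u) * Gamma (1 + v)) := by
    have hΓ {t : ℝ} (ht : 0 < t) := Real.Gamma_pos_of_pos ht
    exact div_pos (hΓ (by positivity)) (mul_pos (hΓ (by positivity)) (hΓ (by positivity)))
  have ratio_lt := (Real.log_lt_log_iff (ratio_pos ha hb) (ratio_pos hc.le hd.le)).1 log_lt
  simpa only [inv_div] using inv_strictAnti₀ (ratio_pos ha hb) ratio_lt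

theorem Gamma_two_mul_Gamma_div_Gamma_add {t : ℝ} (ht : 0 < 1 + t) :
    Gamma (1 + 1) * Gamma (1 + t) / Gamma (1 + 1 + t) = 1 / (1 + t) := by
  have Gamma_ne : Gamma (1 + t) ≠ 0 := (Real.Gamma_pos_of_pos ht).ne'
  have Gamma_succ : Gamma (1 + 1 + t) = (1 + t) * Gamma (1 + t) := by
    rw [add_right_comm, Real.Gamma_add_one ht.ne']
  rw [Gamma_succ, one_add_one_eq_two, Real.Gamma_two]
  field_simp

theorem gamma_ratio_lower_bound (x y : ℝ) (hx : 1 < x) (hy0 : 0 < y) (hy1 : y < 1) :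
    Real.Gamma (1 + x) * Real.Gamma (1 + y) / Real.Gamma (1 + x + y) > 1 / (1 + x * y) := by
  have hx0 : 0 < x := one_pos.trans hx
  have sum_lt : 1 + x * y < x + y := by
    linarith [mul_pos (sub_pos.2 hx) (sub_pos.2 hy1)]
  rw [← Gamma_two_mul_Gamma_div_Gamma_add (by positivity)]
  exact Gamma_mul_Gamma_div_Gamma_add_lt hx0.le hy0.le one_pos (by positivity)
    (one_mul _).ge sum_lt
end

section
/- For all real t with 0 < t < 1, the following two-sided inequality holds: (4/π)·t/(1 − t²) < tan(πt/2) < (π/2)·t/(1 − t²). -/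
/-!
Put `x = π t / 2`, so that the claim becomes `8 x / (π² - 4 x²) < tan x < π² x / (π² - 4 x²)` on
`(0, π / 2)`. After clearing denominators, each inequality asserts that a function vanishing at both
endpoints is positive in between. Its derivative is a positive function times a strictly decreasing
one (`π² - 8 - 4 x²` for the lower bound, `x cot x` minus a constant for the upper bound), so it
changes sign at most once, from positive to negative.
-/

open Real Set

lemma min_lt_of_hasDerivAt_mul_strictAntiOn {f g h : ℝ → ℝ} {a b x : ℝ}
    (hf : ContinuousOn f (Icc a b)) (hf' : ∀ y ∈ Ioo a b, HasDerivAt f (g y * h y) y)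
    (hg : ∀ y ∈ Ioo a b, 0 < g y) (hh : StrictAntiOn h (Ioo a b)) (hx : x ∈ Ioo a b) :
    min (f a) (f b) < f x := by
  by_contra! hmin
  obtain ⟨hfa, hfb⟩ := le_min_iff.1 hmin
  obtain ⟨c, hc, hc_slope⟩ := exists_hasDerivAt_eq_slope f (fun y ↦ g y * h y) hx.1
    (hf.mono (Icc_subset_Icc_right hx.2.le)) fun y hy ↦ hf' y ⟨hy.1, hy.2.trans hx.2⟩
  obtain ⟨d, hd, hd_slope⟩ := exists_hasDerivAt_eq_slope f (fun y ↦ g y * h y) hx.2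
    (hf.mono (Icc_subset_Icc_left hx.1.le)) fun y hy ↦ hf' y ⟨hx.1.trans hy.1, hy.2⟩
  have hc_mem : c ∈ Ioo a b := ⟨hc.1, hc.2.trans hx.2⟩
  have hd_mem : d ∈ Ioo a b := ⟨hx.1.trans hd.1, hd.2⟩
  have hc_nonpos : h c ≤ 0 := by
    refine nonpos_of_mul_nonpos_right (hc_slope.trans_le ?_) (hg c hc_mem)
    exact div_nonpos_of_nonpos_of_nonneg (sub_nonpos.2 hfa) (sub_pos.2 hx.1).le
  have hd_nonneg : 0 ≤ h d := by
    refine nonneg_of_mul_nonneg_right (le_of_le_of_eq ?_ hd_slope.symm) (hg d hd_mem)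
    exact div_nonneg (sub_nonneg.2 hfb) (sub_pos.2 hx.2).le
  exact (hh hc_mem hd_mem (hc.2.trans hd.1)).not_ge (hc_nonpos.trans hd_nonneg)

lemma hasDerivAt_mul_cot {x : ℝ} (hx : sin x ≠ 0) :
    HasDerivAt (fun y ↦ y * cot y) ((sin (2 * x) - 2 * x) / (2 * sin x ^ 2)) x := by
  simp only [cot_eq_cos_div_sin]
  refine ((hasDerivAt_id x).mul ((hasDerivAt_cos x).div (hasDerivAt_sin x) hx)).congr_deriv ?_
  simp only [Pi.div_apply, id, sin_two_mul]
  field_simp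
  linear_combination (-x) * sin_sq_add_cos_sq x

lemma strictAntiOn_mul_cot : StrictAntiOn (fun x ↦ x * cot x) (Ioo 0 π) := by
  have hderiv (x : ℝ) (hx : x ∈ Ioo 0 π) := hasDerivAt_mul_cot (sin_pos_of_mem_Ioo hx).ne'
  refine strictAntiOn_of_deriv_neg (convex_Ioo 0 π)
    (fun x hx ↦ (hderiv x hx).continuousAt.continuousWithinAt) fun x hx ↦ ?_
  rw [interior_Ioo] at hx
  rw [(hderiv x hx).deriv]
  have hsin : 0 < sin x := sin_pos_of_mem_Ioo hx
  have hlt : sin (2 * x) < 2 * x := sin_lt (mul_pos two_pos hx.1)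
  exact div_neg_of_neg_of_pos (sub_neg.2 hlt) (by positivity)

lemma hasDerivAt_pi_sq_sub_four_mul_sq_mul_sin (x : ℝ) :
    HasDerivAt (fun y ↦ (π ^ 2 - 4 * y ^ 2) * sin y)
      ((π ^ 2 - 4 * x ^ 2) * cos x - 8 * x * sin x) x := by
  refine ((((hasDerivAt_pow 2 x).const_mul 4).const_sub (π ^ 2)).mul
    (hasDerivAt_sin x)).congr_deriv ?_
  push_cast
  ring

lemma hasDerivAt_mul_cos (x : ℝ) :
    HasDerivAt (fun y ↦ y * cos y) (cos x - x * sin x) x :=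
  ((hasDerivAt_id x).mul (hasDerivAt_cos x)).congr_deriv (by simp only [id]; ring)

lemma eight_mul_mul_cos_lt_pi_sq_sub_mul_sin {x : ℝ} (hx : x ∈ Ioo 0 (π / 2)) :
    8 * (x * cos x) < (π ^ 2 - 4 * x ^ 2) * sin x := by
  let f (y : ℝ) : ℝ := (π ^ 2 - 4 * y ^ 2) * sin y - 8 * (y * cos y)
  have hf (y : ℝ) : HasDerivAt f (cos y * (π ^ 2 - 8 - 4 * y ^ 2)) y :=
    ((hasDerivAt_pi_sq_sub_four_mul_sq_mul_sin y).sub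
      ((hasDerivAt_mul_cos y).const_mul 8)).congr_deriv (by ring)
  have hanti : StrictAntiOn (fun y ↦ π ^ 2 - 8 - 4 * y ^ 2) (Ioo 0 (π / 2)) := by
    intro y hy z _ hyz
    have := pow_lt_pow_left₀ hyz hy.1.le two_ne_zero
    dsimp only
    linarith
  have hmin : min (f 0) (f (π / 2)) < f x :=
    min_lt_of_hasDerivAt_mul_strictAntiOn (fun y _ ↦ (hf y).continuousAt.continuousWithinAt)
      (fun y _ ↦ hf y)
      (fun y hy ↦ cos_pos_of_mem_Ioo ⟨(neg_lt_zero.2 pi_div_two_pos).trans hy.1, hy.2⟩) hanti hx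
  have hf_zero : f 0 = 0 := by simp [f]
  have hf_pi_div_two : f (π / 2) = 0 := by
    simp only [f, sin_pi_div_two, cos_pi_div_two]
    ring
  rw [hf_zero, hf_pi_div_two, min_self] at hmin
  exact sub_pos.1 hmin

lemma pi_sq_sub_mul_sin_lt_pi_sq_mul_mul_cos {x : ℝ} (hx : x ∈ Ioo 0 (π / 2)) :
    (π ^ 2 - 4 * x ^ 2) * sin x < π ^ 2 * (x * cos x) := by
  let f (y : ℝ) : ℝ := π ^ 2 * (y * cos y) - (π ^ 2 - 4 * y ^ 2) * sin y
  have hsub : Ioo 0 (π / 2) ⊆ Ioo 0 π := Ioo_subset_Ioo_right (half_le_self pi_pos.le)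
  have hsin (y : ℝ) (hy : y ∈ Ioo 0 (π / 2)) : 0 < sin y := sin_pos_of_mem_Ioo (hsub hy)
  have hf (y : ℝ) : HasDerivAt f (4 * y ^ 2 * cos y - (π ^ 2 - 8) * y * sin y) y :=
    (((hasDerivAt_mul_cos y).const_mul (π ^ 2)).sub
      (hasDerivAt_pi_sq_sub_four_mul_sq_mul_sin y)).congr_deriv (by ring)
  have hf' (y : ℝ) (hy : y ∈ Ioo 0 (π / 2)) :
      HasDerivAt f (4 * y * sin y * (y * cot y - (π ^ 2 - 8) / 4)) y := by
    refine (hf y).congr_deriv ?_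
    have := (hsin y hy).ne'
    rw [cot_eq_cos_div_sin]
    field_simp
  have hanti : StrictAntiOn (fun y ↦ y * cot y - (π ^ 2 - 8) / 4) (Ioo 0 (π / 2)) :=
    fun y hy z hz hyz ↦ sub_lt_sub_right (strictAntiOn_mul_cot (hsub hy) (hsub hz) hyz) _
  have hmin : min (f 0) (f (π / 2)) < f x :=
    min_lt_of_hasDerivAt_mul_strictAntiOn (fun y _ ↦ (hf y).continuousAt.continuousWithinAt) hf'
      (fun y hy ↦ mul_pos (mul_pos four_pos hy.1) (hsin y hy)) hanti hx
  have hf_zero : f 0 = 0 := by simp [f]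
  have hf_pi_div_two : f (π / 2) = 0 := by
    simp only [f, sin_pi_div_two, cos_pi_div_two]
    ring
  rw [hf_zero, hf_pi_div_two, min_self] at hmin
  exact sub_pos.1 hmin

lemma pi_sq_sub_four_mul_sq_pos {x : ℝ} (hx : x ∈ Ioo (-(π / 2)) (π / 2)) :
    0 < π ^ 2 - 4 * x ^ 2 := by
  nlinarith [hx.1, hx.2]

lemma eight_mul_div_lt_tan {x : ℝ} (hx : x ∈ Ioo 0 (π / 2)) :
    8 * x / (π ^ 2 - 4 * x ^ 2) < tan x := by
  have hx' : x ∈ Ioo (-(π / 2)) (π / 2) := ⟨(neg_lt_zero.2 pi_div_two_pos).trans hx.1, hx.2⟩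
  rw [tan_eq_sin_div_cos, div_lt_div_iff₀ (pi_sq_sub_four_mul_sq_pos hx') (cos_pos_of_mem_Ioo hx')]
  linarith [eight_mul_mul_cos_lt_pi_sq_sub_mul_sin hx]

lemma tan_lt_pi_sq_mul_div {x : ℝ} (hx : x ∈ Ioo 0 (π / 2)) :
    tan x < π ^ 2 * x / (π ^ 2 - 4 * x ^ 2) := by
  have hx' : x ∈ Ioo (-(π / 2)) (π / 2) := ⟨(neg_lt_zero.2 pi_div_two_pos).trans hx.1, hx.2⟩
  rw [tan_eq_sin_div_cos, div_lt_div_iff₀ (cos_pos_of_mem_Ioo hx') (pi_sq_sub_four_mul_sq_pos hx')]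
  linarith [pi_sq_sub_mul_sin_lt_pi_sq_mul_mul_cos hx]

theorem tan_half_pi_t_bounds (t : ℝ) (ht0 : 0 < t) (ht1 : t < 1) :
    (4 / Real.pi) * (t / (1 - t ^ 2)) < Real.tan (Real.pi * t / 2) ∧
    Real.tan (Real.pi * t / 2) < (Real.pi / 2) * (t / (1 - t ^ 2)) := by
  have hx : π * t / 2 ∈ Ioo 0 (π / 2) :=
    ⟨by positivity, div_lt_div_of_pos_right (mul_lt_of_lt_one_right pi_pos ht1) two_pos⟩
  have hden : π ^ 2 - 4 * (π * t / 2) ^ 2 = π ^ 2 * (1 - t ^ 2) := by ring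
  constructor
  · calc 4 / π * (t / (1 - t ^ 2))
        = 8 * (π * t / 2) / (π ^ 2 - 4 * (π * t / 2) ^ 2) := by rw [hden]; field_simp; norm_num
      _ < tan (π * t / 2) := eight_mul_div_lt_tan hx
  · calc tan (π * t / 2)
        < π ^ 2 * (π * t / 2) / (π ^ 2 - 4 * (π * t / 2) ^ 2) := tan_lt_pi_sq_mul_div hx
      _ = π / 2 * (t / (1 - t ^ 2)) := by rw [hden]; field_simp
end

section
/- For all real x with 0 < x < π, the following chain of inequalities holds with α = 16/π² and β = 1: ((π² − x²)/(π² + x²))^(4/(3β)) < (cos(x/2))^(4/3) < (sin x)/x < ((π² − x²)/(π² + x²))^(4/(3α)). -/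
/-!
Each inequality is reduced to a sharper elementary fact.

* In terms of the half angle, `cos (x / 2) = (1 - tan (x / 4) ^ 2) / (1 + tan (x / 4) ^ 2)`, so the
  lower bound says that `tan (x / 4) < x / π`: the graph of `tan` lies below its chord over
  `[0, π / 4]`.
* Since `sin x / x = cos (x / 2) * (sin (x / 2) / (x / 2))`, the middle inequality is the
  Mitrinović–Adamović inequality `cos y < (sin y / y) ^ 3` at `y = x / 2`, which follows by
  comparing Taylor polynomials.
* With `u = x / π`, bounding all factors but the first of Euler's product for `sin (π * u)` by
  `1 - a ≤ exp (-a)` gives `sin x / x ≤ (1 - u ^ 2) * exp (-(π ^ 2 / 6 - 1) * u ^ 2)`. The upper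
  bound follows from `log (1 ± t) < ±t` at `t = u ^ 2`, because `π ^ 2 / 6 - 1 = 2 * c - 1` for the
  exponent `c = π ^ 2 / 12`.
-/

open Real Filter Topology

theorem strictConvexOn_tan_Ico : StrictConvexOn ℝ (Set.Ico 0 (π / 2)) tan := by
  have hcos_pos {y : ℝ} (hy : y ∈ Set.Ico 0 (π / 2)) : 0 < cos y :=
    cos_pos_of_mem_Ioo ⟨by linarith [hy.1, pi_pos], hy.2⟩
  refine StrictMonoOn.strictConvexOn_of_deriv (convex_Ico _ _)
    (fun y hy ↦ (continuousAt_tan.2 (hcos_pos hy).ne').continuousWithinAt) ?_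
  rw [interior_Ico]
  intro y hy z hz hyz
  have hcos : cos z < cos y :=
    cos_lt_cos_of_nonneg_of_le_pi_div_two hy.1.le hz.2.le hyz
  have hz0 : 0 < cos z := hcos_pos ⟨hz.1.le, hz.2⟩
  simp only [Real.deriv_tan]
  gcongr

theorem strictMonoOn_tan_div_self : StrictMonoOn (fun x ↦ tan x / x) (Set.Ioo 0 (π / 2)) := by
  intro x hx y hy hxy
  simpa using strictConvexOn_tan_Ico.secant_strict_mono (Set.left_mem_Ico.2 pi_div_two_pos)
    ⟨hx.1.le, hx.2⟩ ⟨hy.1.le, hy.2⟩ hx.1.ne' hy.1.ne' hxy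

theorem tan_lt_four_div_pi_mul {x : ℝ} (hx0 : 0 < x) (hx : x < π / 4) : tan x < 4 / π * x := by
  have := pi_pos
  have h : tan x / x < tan (π / 4) / (π / 4) :=
    strictMonoOn_tan_div_self ⟨hx0, by linarith⟩ ⟨by linarith, by linarith⟩ hx
  rwa [tan_pi_div_four, one_div_div, div_lt_iff₀ hx0] at h

theorem cos_two_mul_eq_one_sub_tan_sq_div {x : ℝ} (hx : cos x ≠ 0) :
    cos (2 * x) = (1 - tan x ^ 2) / (1 + tan x ^ 2) := by
  rw [div_eq_mul_inv, inv_one_add_tan_sq hx, sub_mul, one_mul, tan_eq_sin_div_cos, ← mul_pow,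
    div_mul_cancel₀ _ hx, cos_two_mul']

theorem pi_sq_sub_sq_div_lt_cos_half {x : ℝ} (hx0 : 0 < x) (hx : x < π) :
    (π ^ 2 - x ^ 2) / (π ^ 2 + x ^ 2) < cos (x / 2) := by
  have := pi_pos
  have hcos : 0 < cos (x / 4) := cos_pos_of_mem_Ioo ⟨by linarith, by linarith⟩
  have htan0 : 0 < tan (x / 4) := tan_pos_of_pos_of_lt_pi_div_two (by linarith) (by linarith)
  have htan : tan (x / 4) < x / π := by
    convert! tan_lt_four_div_pi_mul (show 0 < x / 4 by linarith) (by linarith) using 1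
    ring
  calc (π ^ 2 - x ^ 2) / (π ^ 2 + x ^ 2)
    _ = (1 - (x / π) ^ 2) / (1 + (x / π) ^ 2) := by field_simp
    _ < (1 - tan (x / 4) ^ 2) / (1 + tan (x / 4) ^ 2) := by
      have hsq : tan (x / 4) ^ 2 < (x / π) ^ 2 := by gcongr
      rw [div_lt_div_iff₀ (by positivity) (by positivity)]
      linarith
    _ = cos (x / 2) := by
      rw [← cos_two_mul_eq_one_sub_tan_sq_div hcos.ne']
      ring_nf

theorem cos_le_one_sub_sq_div_two_add_pow_four_div (x : ℝ) :
    cos x ≤ 1 - x ^ 2 / 2 + x ^ 4 / 24 := by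
  wlog hx : 0 < x generalizing x
  · rcases (not_lt.1 hx).eq_or_lt with rfl | hneg
    · simp
    · simpa [(show Even 4 by decide).neg_pow] using this (-x) (neg_pos.2 hneg)
  rcases le_total 12 (x ^ 2) with hlarge | hsmall
  · linarith [cos_le_one x, mul_nonneg (sq_nonneg x) (sub_nonneg.2 hlarge)]
  have hsin : (x / 2 - (x / 2) ^ 3 / 6) ^ 2 ≤ sin (x / 2) ^ 2 := by
    refine pow_le_pow_left₀ ?_ (sin_gt_sub_cube (half_pos hx)).le 2
    linarith [mul_nonneg hx.le (sub_nonneg.2 hsmall)]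
  calc cos x
    _ = 1 - 2 * sin (x / 2) ^ 2 := by rw [← cos_two_mul_eq_one_sub, mul_div_cancel₀ x two_ne_zero]
    _ ≤ 1 - 2 * (x / 2 - (x / 2) ^ 3 / 6) ^ 2 := by gcongr
    _ = 1 - x ^ 2 / 2 + x ^ 4 / 24 - x ^ 6 / 1152 := by ring
    _ ≤ 1 - x ^ 2 / 2 + x ^ 4 / 24 := sub_le_self _ (by positivity)

theorem cos_lt_sin_div_self_pow_three {x : ℝ} (hx0 : 0 < x) (hx : x ≤ 3) :
    cos x < (sin x / x) ^ 3 := by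
  have hx9 : x ^ 2 ≤ 9 := by nlinarith
  have hsin : 1 - x ^ 2 / 6 < sin x / x := by
    rw [lt_div_iff₀ hx0]
    linarith [sin_gt_sub_cube hx0]
  calc cos x
    _ ≤ 1 - x ^ 2 / 2 + x ^ 4 / 24 := cos_le_one_sub_sq_div_two_add_pow_four_div x
    _ ≤ 1 - x ^ 2 / 2 + x ^ 4 / 24 + x ^ 4 * (9 - x ^ 2) / 216 :=
      le_add_of_nonneg_right (by have := sub_nonneg.2 hx9; positivity)
    _ = (1 - x ^ 2 / 6) ^ 3 := by ring
    _ < (sin x / x) ^ 3 := Odd.strictMono_pow (by decide) hsin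

theorem sin_div_self_eq_cos_half_mul (x : ℝ) :
    sin x / x = cos (x / 2) * (sin (x / 2) / (x / 2)) := by
  nth_rw 1 [← mul_div_cancel₀ x (two_ne_zero' ℝ), sin_two_mul]
  field_simp

theorem cos_half_rpow_lt_sin_div_self {x : ℝ} (hx0 : 0 < x) (hx : x < π) :
    cos (x / 2) ^ (4 / 3 : ℝ) < sin x / x := by
  have hcos : 0 < cos (x / 2) := cos_pos_of_mem_Ioo ⟨by linarith, by linarith⟩
  have hsin : 0 < sin (x / 2) := sin_pos_of_pos_of_lt_pi (by linarith) (by linarith)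
  have hroot : cos (x / 2) ^ (3⁻¹ : ℝ) < sin (x / 2) / (x / 2) := by
    rw [rpow_inv_lt_iff_of_pos hcos.le (by positivity) (by norm_num)]
    exact_mod_cast cos_lt_sin_div_self_pow_three (half_pos hx0) (by linarith [pi_lt_four])
  calc cos (x / 2) ^ (4 / 3 : ℝ)
    _ = cos (x / 2) * cos (x / 2) ^ (3⁻¹ : ℝ) := by
      rw [← rpow_one_add' hcos.le (by norm_num)]
      norm_num
    _ < cos (x / 2) * (sin (x / 2) / (x / 2)) := by gcongr
    _ = sin x / x := (sin_div_self_eq_cos_half_mul x).symm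

theorem prod_one_sub_le_exp_neg_sum {ι : Type*} {s : Finset ι} {a : ι → ℝ}
    (ha : ∀ i ∈ s, a i ≤ 1) : ∏ i ∈ s, (1 - a i) ≤ exp (-∑ i ∈ s, a i) := by
  rw [← Finset.sum_neg_distrib, exp_sum]
  exact Finset.prod_le_prod (fun i hi ↦ sub_nonneg.2 (ha i hi))
    fun i _ ↦ one_sub_le_exp_neg (a i)

theorem hasSum_one_div_nat_add_two_sq :
    HasSum (fun n : ℕ ↦ 1 / ((n : ℝ) + 2) ^ 2) (π ^ 2 / 6 - 1) := by
  simpa [Finset.sum_range_succ] using (hasSum_nat_add_iff' 2).2 hasSum_zeta_two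

theorem sin_pi_mul_le {u : ℝ} (hu0 : 0 ≤ u) (hu1 : u ≤ 1) :
    sin (π * u) ≤ π * u * ((1 - u ^ 2) * exp (-((π ^ 2 / 6 - 1) * u ^ 2))) := by
  have hu2 : u ^ 2 ≤ 1 := pow_le_one₀ hu0 hu1
  have hsum := (hasSum_one_div_nat_add_two_sq.mul_right (u ^ 2)).tendsto_sum_nat
  have hprod := (tendsto_add_atTop_iff_nat 1).2 (tendsto_euler_sin_prod u)
  have hbound :=
    (((continuous_exp.tendsto _).comp hsum.neg).const_mul (1 - u ^ 2)).const_mul (π * u)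
  refine le_of_tendsto_of_tendsto' hprod hbound fun n ↦ ?_
  have htail : ∏ j ∈ Finset.range n, (1 - 1 / ((j : ℝ) + 2) ^ 2 * u ^ 2) ≤
      exp (-∑ j ∈ Finset.range n, 1 / ((j : ℝ) + 2) ^ 2 * u ^ 2) := by
    refine prod_one_sub_le_exp_neg_sum fun j _ ↦ ?_
    rw [one_div_mul_eq_div]
    exact div_le_one_of_le₀ (hu2.trans (one_le_pow₀ (by linarith [j.cast_nonneg (α := ℝ)])))
      (by positivity)
  have hsplit : ∏ j ∈ Finset.range (n + 1), (1 - u ^ 2 / ((j : ℝ) + 1) ^ 2) =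
      (1 - u ^ 2) * ∏ j ∈ Finset.range n, (1 - 1 / ((j : ℝ) + 2) ^ 2 * u ^ 2) := by
    rw [Finset.prod_range_succ', mul_comm]
    simp [add_assoc, one_add_one_eq_two, inv_mul_eq_div]
  rw [hsplit]
  have := sub_nonneg.2 hu2
  dsimp only [Function.comp_apply]
  gcongr

theorem one_sub_mul_exp_lt_rpow {c t : ℝ} (hc0 : 0 ≤ c) (hc1 : c ≤ 1) (ht0 : t ≠ 0)
    (ht_gt : -1 < t) (ht_lt : t < 1) :
    (1 - t) * exp (-((2 * c - 1) * t)) < ((1 - t) / (1 + t)) ^ c := by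
  have hsub : 0 < 1 - t := by linarith
  have hadd : 0 < 1 + t := by linarith
  have hlog_sub : log (1 - t) < -t := by
    linarith [log_lt_sub_one_of_pos hsub (by simpa using ht0)]
  have hlog_add : log (1 + t) < t := by
    linarith [log_lt_sub_one_of_pos hadd (by simpa using ht0)]
  have hlog : (1 - c) * log (1 - t) + c * log (1 + t) < (1 - c) * -t + c * t := by
    rcases hc0.eq_or_lt with rfl | hc
    · simpa using hlog_sub
    · exact add_lt_add_of_le_of_lt (by gcongr) (by gcongr)
  rw [← log_lt_log_iff (by positivity) (by positivity), log_mul hsub.ne' (exp_pos _).ne', log_exp,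
    log_rpow (by positivity), log_div hsub.ne' hadd.ne']
  linarith

theorem sin_div_self_lt_rpow {x : ℝ} (hx0 : 0 < x) (hx : x < π) :
    sin x / x < ((π ^ 2 - x ^ 2) / (π ^ 2 + x ^ 2)) ^ (π ^ 2 / 12) := by
  have hpi := pi_pos
  have hu0 : 0 < x / π := by positivity
  have hu1 : x / π < 1 := (div_lt_one hpi).2 hx
  have hsq1 : (x / π) ^ 2 < 1 := pow_lt_one₀ hu0.le hu1 two_ne_zero
  have hexponent : π ^ 2 / 12 ≤ 1 := by nlinarith [pi_lt_d2]
  calc sin x / x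
    _ ≤ (1 - (x / π) ^ 2) * exp (-((π ^ 2 / 6 - 1) * (x / π) ^ 2)) := by
      rw [div_le_iff₀' hx0]
      simpa only [mul_div_cancel₀ x hpi.ne'] using sin_pi_mul_le hu0.le hu1.le
    _ = (1 - (x / π) ^ 2) * exp (-((2 * (π ^ 2 / 12) - 1) * (x / π) ^ 2)) := by ring_nf
    _ < ((1 - (x / π) ^ 2) / (1 + (x / π) ^ 2)) ^ (π ^ 2 / 12) :=
      one_sub_mul_exp_lt_rpow (by positivity) hexponent (by positivity)
        (by linarith [sq_nonneg (x / π)]) hsq1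
    _ = ((π ^ 2 - x ^ 2) / (π ^ 2 + x ^ 2)) ^ (π ^ 2 / 12) := by
      congr 1
      field_simp

theorem sin_div_redheffer_chain (x : ℝ) (hx0 : 0 < x) (hxpi : x < Real.pi) :
    ((Real.pi ^ 2 - x ^ 2) / (Real.pi ^ 2 + x ^ 2)) ^ (4 / (3 * (1 : ℝ))) <
      Real.cos (x / 2) ^ ((4 : ℝ) / 3) ∧
    Real.cos (x / 2) ^ ((4 : ℝ) / 3) < Real.sin x / x ∧
    Real.sin x / x <
      ((Real.pi ^ 2 - x ^ 2) / (Real.pi ^ 2 + x ^ 2)) ^ (4 / (3 * (16 / Real.pi ^ 2))) := by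
  have hbase : 0 ≤ (π ^ 2 - x ^ 2) / (π ^ 2 + x ^ 2) :=
    div_nonneg (sub_nonneg.2 (by gcongr)) (by positivity)
  have hexponent : 4 / (3 * (16 / π ^ 2)) = π ^ 2 / 12 := by
    field_simp
    norm_num
  refine ⟨?_, cos_half_rpow_lt_sin_div_self hx0 hxpi, ?_⟩
  · rw [mul_one]
    exact rpow_lt_rpow hbase (pi_sq_sub_sq_div_lt_cos_half hx0 hxpi) (by norm_num)
  · rw [hexponent]
    exact sin_div_self_lt_rpow hx0 hxpi
end

section
/- For all real x with 0 < x < π, one has (sin x)/x < (π² − x²)/π². -/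
/-!
By Euler's product, `sin (π z) = π z ∏ (1 - z² / (j + 1)²)`. A factor with `z² ≤ 2 (j + 1)²` has
absolute value at most `1`, so once this holds for all remaining factors the partial products bound
the sine. For `0 < z² < 2`, keeping the first two factors gives
`|sin (π z)| ≤ |π z (1 - z²) (1 - z² / 4)|`, and the second of them makes the inequality strict
unless `z² = 1`. For `z² ≥ 2` one has `|1 - z²| ≥ 1`, and `|sin x| < |x|` is enough.
-/

section

open Finset Real

lemma abs_prod_range_le_abs_prod_range {R : Type*} [CommRing R] [LinearOrder R]
    [IsStrictOrderedRing R] {f : ℕ → R} {m n : ℕ} (hmn : m ≤ n) (hf : ∀ j ≥ m, |f j| ≤ 1) :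
    |∏ j ∈ range n, f j| ≤ |∏ j ∈ range m, f j| := by
  rw [← prod_range_mul_prod_Ico f hmn, abs_mul, abs_prod (Ico m n)]
  exact mul_le_of_le_one_right (abs_nonneg _) <|
    prod_le_one (fun j _ ↦ abs_nonneg (f j)) fun j hj ↦ hf j (mem_Ico.1 hj).1

lemma abs_sin_pi_mul_le_abs_euler_prod {z : ℝ} {n : ℕ} (hz : z ^ 2 ≤ 2 * ((n : ℝ) + 1) ^ 2) :
    |sin (π * z)| ≤ |π * z * ∏ j ∈ range n, (1 - z ^ 2 / ((j : ℝ) + 1) ^ 2)| := by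
  have abs_factor_le_one : ∀ j ≥ n, |1 - z ^ 2 / ((j : ℝ) + 1) ^ 2| ≤ 1 := fun j hj ↦ by
    have nonneg : 0 ≤ z ^ 2 / ((j : ℝ) + 1) ^ 2 := by positivity
    have le_two : z ^ 2 / ((j : ℝ) + 1) ^ 2 ≤ 2 := by
      rw [div_le_iff₀ (by positivity)]
      exact hz.trans (by gcongr)
    exact abs_le.2 ⟨by linarith, by linarith⟩
  refine le_of_tendsto (tendsto_euler_sin_prod z).abs ?_
  filter_upwards [Filter.eventually_ge_atTop n] with m hm
  rw [abs_mul, abs_mul (π * z)]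
  gcongr ?_ * ?_
  exact abs_prod_range_le_abs_prod_range hm abs_factor_le_one

lemma abs_sin_pi_mul_lt_abs_mul_one_sub_sq {z : ℝ} (hz0 : z ≠ 0) (hz1 : z ^ 2 ≠ 1) :
    |sin (π * z)| < |π * z * (1 - z ^ 2)| := by
  have hpiz : π * z ≠ 0 := mul_ne_zero pi_ne_zero hz0
  obtain hz | hz := lt_or_ge (z ^ 2) 2
  · have second_factor : |1 - z ^ 2 / 4| < 1 := by
      have : 0 < z ^ 2 := by positivity
      exact abs_lt.2 ⟨by linarith, by linarith⟩
    calc |sin (π * z)|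
        ≤ |π * z * ∏ j ∈ range 2, (1 - z ^ 2 / ((j : ℝ) + 1) ^ 2)| :=
          abs_sin_pi_mul_le_abs_euler_prod (by norm_num; linarith)
      _ = |π * z * (1 - z ^ 2)| * |1 - z ^ 2 / 4| := by
          rw [← abs_mul, prod_range_succ, prod_range_one]
          norm_num [mul_assoc]
      _ < |π * z * (1 - z ^ 2)| :=
          mul_lt_of_lt_one_right
            (abs_pos.2 (mul_ne_zero hpiz (sub_ne_zero.2 hz1.symm))) second_factor
  · have one_le : 1 ≤ |1 - z ^ 2| := le_abs.2 (.inr (by linarith))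
    calc |sin (π * z)| < |π * z| := abs_sin_lt_abs hpiz
      _ ≤ |π * z| * |1 - z ^ 2| := le_mul_of_one_le_right (abs_nonneg _) one_le
      _ = |π * z * (1 - z ^ 2)| := (abs_mul _ _).symm

theorem sin_div_lt_one_sub_sq_general {x : ℝ} (hx0 : x ≠ 0) (hxpi : x ^ 2 ≠ π ^ 2) :
    |sin x / x| < |(π ^ 2 - x ^ 2) / π ^ 2| := by
  have hz1 : (x / π) ^ 2 ≠ 1 := by
    rwa [div_pow, Ne, div_eq_one_iff_eq (by positivity)]
  have sin_lt := abs_sin_pi_mul_lt_abs_mul_one_sub_sq (div_ne_zero hx0 pi_ne_zero) hz1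
  rw [mul_div_cancel₀ x pi_ne_zero, abs_mul] at sin_lt
  rwa [abs_div, div_lt_iff₀' (abs_pos.2 hx0), sub_div, div_self (by positivity), ← div_pow]

end

theorem sin_div_lt_one_sub_sq (x : ℝ) (hx0 : 0 < x) (hxpi : x < Real.pi) :
    Real.sin x / x < (Real.pi ^ 2 - x ^ 2) / Real.pi ^ 2 := by
  have hsq : x ^ 2 < Real.pi ^ 2 := by gcongr
  exact abs_of_nonneg (div_nonneg (sub_nonneg.2 hsq.le) (sq_nonneg Real.pi)) ▸
    (le_abs_self _).trans_lt (sin_div_lt_one_sub_sq_general hx0.ne' hsq.ne)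
end
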